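/- arXiv:2202.14022 — 3 statements merged into one kernel-verified Lean document; each statement's English description precedes it below -/
import Mathlib

section
/- Let X be an infinite set, ℱ a non-principal ultrafilter on X, A a ring of finite cardinality, and (M_α)_{α∈X}, (N_α)_{α∈X} bounded families of A-modules. Then the natural map (∏_{α∈X} Hom_A(M_α, N_α))_ℱ → Hom_A((∏_{α∈X} M_α)_ℱ, (∏_{α∈X} N_α)_ℱ), sending the class of a family of homomorphisms (f_α) to the homomorphism it induces on ultraproducts, is an isomorphism of A-modules. -/
open Filter

section Ultra

variable {X : Type*} (ℱ : Ultrafilter X) (A : Type*) [Ring A]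

/-- The submodule of families vanishing on a set of the ultrafilter. -/
def ultraZero (M : X → Type*) [∀ α, AddCommGroup (M α)] [∀ α, Module A (M α)] :
    Submodule A (∀ α, M α) where
  carrier := {x | ∀ᶠ α in (ℱ : Filter X), x α = 0}
  add_mem' := by
    intro a b ha hb
    filter_upwards [ha, hb] with α h1 h2
    simp [h1, h2]
  zero_mem' := Filter.Eventually.of_forall fun _ => rfl
  smul_mem' := by
    intro c x hx
    filter_upwards [hx] with α h
    simp [h]

lemma mem_ultraZero {M : X → Type*} [∀ α, AddCommGroup (M α)] [∀ α, Module A (M α)]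
    {x : ∀ α, M α} :
    x ∈ ultraZero ℱ A M ↔ ∀ᶠ α in (ℱ : Filter X), x α = 0 := Iff.rfl

/-- The ultraproduct of a family of `A`-modules along the ultrafilter `ℱ`. -/
abbrev Ultraproduct (M : X → Type*) [∀ α, AddCommGroup (M α)] [∀ α, Module A (M α)] :=
  (∀ α, M α) ⧸ ultraZero ℱ A M

/-- The map induced on ultraproducts by a family of linear maps. -/
def ultraMap {M N : X → Type*} [∀ α, AddCommGroup (M α)] [∀ α, Module A (M α)]
    [∀ α, AddCommGroup (N α)] [∀ α, Module A (N α)] (f : ∀ α, M α →ₗ[A] N α) :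
    Ultraproduct ℱ A M →ₗ[A] Ultraproduct ℱ A N :=
  Submodule.mapQ _ _ (LinearMap.pi fun α => (f α).comp (LinearMap.proj α)) <| by
    intro x hx
    simp only [Submodule.mem_comap]
    rw [mem_ultraZero]
    filter_upwards [hx] with α h
    simp [h]

lemma ultraMap_mk {M N : X → Type*} [∀ α, AddCommGroup (M α)] [∀ α, Module A (M α)]
    [∀ α, AddCommGroup (N α)] [∀ α, Module A (N α)] (f : ∀ α, M α →ₗ[A] N α)
    (x : ∀ α, M α) :
    ultraMap ℱ A f (Submodule.Quotient.mk x) =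
      Submodule.Quotient.mk (fun α => f α (x α)) := by
  simp [ultraMap, Submodule.mapQ_apply]
  rfl

end Ultra

section HomUltra

variable {X : Type*} (ℱ : Ultrafilter X) (A : Type*) [CommRing A]
variable (M N : X → Type*) [∀ α, AddCommGroup (M α)] [∀ α, Module A (M α)]
  [∀ α, AddCommGroup (N α)] [∀ α, Module A (N α)]

/-- The natural map from the ultraproduct of the modules of homomorphisms to the module of
homomorphisms between the ultraproducts. -/
def homUltraMap :
    Ultraproduct ℱ A (fun α => M α →ₗ[A] N α) →ₗ[A]
      (Ultraproduct ℱ A M →ₗ[A] Ultraproduct ℱ A N) :=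
  Submodule.liftQ _
    { toFun := fun f => ultraMap ℱ A f
      map_add' := fun f g => by
        refine LinearMap.ext fun u => ?_
        obtain ⟨x, rfl⟩ := Submodule.Quotient.mk_surjective _ u
        simp only [LinearMap.add_apply, ultraMap_mk, ← Submodule.Quotient.mk_add]
        rfl
      map_smul' := fun c f => by
        refine LinearMap.ext fun u => ?_
        obtain ⟨x, rfl⟩ := Submodule.Quotient.mk_surjective _ u
        simp only [RingHom.id_apply, LinearMap.smul_apply, ultraMap_mk,
          ← Submodule.Quotient.mk_smul]
        rfl }
    (by
      intro f hf
      simp only [LinearMap.mem_ker, LinearMap.coe_mk, AddHom.coe_mk]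
      refine LinearMap.ext fun u => ?_
      obtain ⟨x, rfl⟩ := Submodule.Quotient.mk_surjective _ u
      rw [ultraMap_mk]
      simp only [LinearMap.zero_apply]
      rw [Submodule.Quotient.mk_eq_zero, mem_ultraZero]
      filter_upwards [hf] with α h
      rw [h]
      rfl)

end HomUltra

/-!
Suppose every `M α` is a quotient `p α : P → M α` of one finite, finitely presented module `P`
(such as `A ^ s` when `A` is finite). An ultrafilter makes any family of elements of the finite set
`P` constant on a large set, so `P` itself surjects onto the ultraproduct of the `M α`, and a
homomorphism `φ` between the ultraproducts is determined by its pullback to `P`. Finite presentation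
lifts this pullback to a family of maps `g α : P → N α`. That `g α` kills the kernel of `p α`
amounts to finitely many implications between elements of `P`, each true for almost every `α`; hence
almost all `g α` descend to maps `M α → N α`, and these represent `φ`.

For injectivity, if `f α ≠ 0` for almost every `α`, choosing `x α` with
`f α (x α) ≠ 0` gives an element of the ultraproduct not killed by the induced map.
-/

theorem exists_linearMap_comp_eq_of_ker_le {A L M N : Type*} [Ring A]
    [AddCommGroup L] [Module A L] [AddCommGroup M] [Module A M] [AddCommGroup N] [Module A N]
    {q : L →ₗ[A] M} (hq : Function.Surjective q) {g : L →ₗ[A] N}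
    (h : LinearMap.ker q ≤ LinearMap.ker g) : ∃ f : M →ₗ[A] N, f ∘ₗ q = g :=
  ⟨(LinearMap.ker q).liftQ g h ∘ₗ (q.quotKerEquivOfSurjective hq).symm, by ext v; simp⟩

section Ultraproduct

variable {X : Type*} {ℱ : Ultrafilter X} {A : Type*} [Ring A]
variable {L M N : X → Type*} [∀ α, AddCommGroup (L α)] [∀ α, Module A (L α)]
  [∀ α, AddCommGroup (M α)] [∀ α, Module A (M α)] [∀ α, AddCommGroup (N α)] [∀ α, Module A (N α)]
variable {P : Type*} [AddCommGroup P] [Module A P]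

theorem Ultraproduct.mk_eq_mk_iff {x y : ∀ α, M α} :
    (Submodule.Quotient.mk x : Ultraproduct ℱ A M) = Submodule.Quotient.mk y ↔
      ∀ᶠ α in (ℱ : Filter X), x α = y α := by
  simp only [Submodule.Quotient.eq, mem_ultraZero, Pi.sub_apply, sub_eq_zero]

theorem eventually_eq_zero_of_ultraMap_eq_zero {f : ∀ α, M α →ₗ[A] N α}
    (hf : ultraMap ℱ A f = 0) : ∀ᶠ α in (ℱ : Filter X), f α = 0 := by
  have exists_witness (α : X) : ∃ x : M α, f α x = 0 → f α = 0 := by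
    by_contra! h
    exact (h 0).2 (LinearMap.ext fun x => (h x).1)
  choose x hx using exists_witness
  have hfx : (Submodule.Quotient.mk fun α => f α (x α) : Ultraproduct ℱ A N) = 0 := by
    rw [← ultraMap_mk, hf, LinearMap.zero_apply]
  rw [Submodule.Quotient.mk_eq_zero, mem_ultraZero] at hfx
  exact hfx.mono hx

theorem exists_eventually_comp_eq_of_eventually_ker_le {q : ∀ α, L α →ₗ[A] M α}
    (hq : ∀ α, Function.Surjective (q α)) {g : ∀ α, L α →ₗ[A] N α}
    (h : ∀ᶠ α in (ℱ : Filter X), LinearMap.ker (q α) ≤ LinearMap.ker (g α)) :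
    ∃ f : ∀ α, M α →ₗ[A] N α, ∀ᶠ α in (ℱ : Filter X), f α ∘ₗ q α = g α :=
  Filter.skolem.1 (h.mono fun α => exists_linearMap_comp_eq_of_ker_le (hq α))

variable (ℱ) in
/-- The homomorphism from a fixed module `P` to an ultraproduct induced by a family of
homomorphisms out of `P`; it sends `v` to the class of `(g α v)`. -/
def ultraPi (g : ∀ α, P →ₗ[A] N α) : P →ₗ[A] Ultraproduct ℱ A N :=
  (ultraZero ℱ A N).mkQ ∘ₗ LinearMap.pi g

theorem ultraPi_apply (g : ∀ α, P →ₗ[A] N α) (v : P) :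
    ultraPi ℱ g v = Submodule.Quotient.mk fun α => g α v := rfl

theorem ultraPi_apply_eq_zero_iff {g : ∀ α, P →ₗ[A] N α} {v : P} :
    ultraPi ℱ g v = 0 ↔ ∀ᶠ α in (ℱ : Filter X), g α v = 0 := by
  rw [ultraPi_apply, Submodule.Quotient.mk_eq_zero, mem_ultraZero]

theorem ultraPi_congr {g g' : ∀ α, P →ₗ[A] N α} (h : ∀ᶠ α in (ℱ : Filter X), g α = g' α) :
    ultraPi ℱ g = ultraPi ℱ g' :=
  LinearMap.ext fun v => Ultraproduct.mk_eq_mk_iff.2 (h.mono fun _ hα => LinearMap.congr_fun hα v)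

theorem ultraPi_comp {Q : Type*} [AddCommGroup Q] [Module A Q] (g : ∀ α, P →ₗ[A] N α)
    (q : Q →ₗ[A] P) : ultraPi ℱ g ∘ₗ q = ultraPi ℱ fun α => g α ∘ₗ q := rfl

theorem ultraMap_comp_ultraPi (f : ∀ α, M α →ₗ[A] N α) (p : ∀ α, P →ₗ[A] M α) :
    ultraMap ℱ A f ∘ₗ ultraPi ℱ p = ultraPi ℱ fun α => f α ∘ₗ p α :=
  LinearMap.ext fun _ => ultraMap_mk ℱ A f _

theorem ultraPi_surjective [Finite P] {p : ∀ α, P →ₗ[A] M α}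
    (hp : ∀ α, Function.Surjective (p α)) : Function.Surjective (ultraPi ℱ p) := by
  intro u
  obtain ⟨x, rfl⟩ := Submodule.Quotient.mk_surjective _ u
  obtain ⟨v, hv⟩ : ∃ v, ∀ᶠ α in (ℱ : Filter X), p α v = x α :=
    Ultrafilter.eventually_exists_iff.1 (.of_forall fun α => hp α (x α))
  exact ⟨v, Ultraproduct.mk_eq_mk_iff.2 hv⟩

theorem eventually_ker_le_ker_of_ultraPi [Finite P] {p : ∀ α, P →ₗ[A] M α}
    {g : ∀ α, P →ₗ[A] N α} (h : LinearMap.ker (ultraPi ℱ p) ≤ LinearMap.ker (ultraPi ℱ g)) :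
    ∀ᶠ α in (ℱ : Filter X), LinearMap.ker (p α) ≤ LinearMap.ker (g α) := by
  refine eventually_all.2 fun v => Ultrafilter.eventually_imp.2 fun hv => ?_
  exact ultraPi_apply_eq_zero_iff.1 (h (ultraPi_apply_eq_zero_iff.2 hv))

theorem eventually_le_ker_of_fg {K : Submodule A P} (hK : K.FG) {g : ∀ α, P →ₗ[A] N α}
    (h : K ≤ LinearMap.ker (ultraPi ℱ g)) :
    ∀ᶠ α in (ℱ : Filter X), K ≤ LinearMap.ker (g α) := by
  obtain ⟨S, rfl⟩ := hK
  simp only [Submodule.span_le] at h ⊢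
  exact (eventually_all_finset S).2 fun v hv => ultraPi_apply_eq_zero_iff.1 (h hv)

theorem exists_ultraPi_eq_of_projective [Module.Projective A P]
    (ψ : P →ₗ[A] Ultraproduct ℱ A N) : ∃ g : ∀ α, P →ₗ[A] N α, ultraPi ℱ g = ψ := by
  obtain ⟨h, hh⟩ := Module.projective_lifting_property _ ψ (ultraZero ℱ A N).mkQ_surjective
  exact ⟨fun α => LinearMap.proj α ∘ₗ h, hh⟩

theorem exists_ultraPi_eq_of_finitePresentation [Module.FinitePresentation A P]
    (ψ : P →ₗ[A] Ultraproduct ℱ A N) : ∃ g : ∀ α, P →ₗ[A] N α, ultraPi ℱ g = ψ := by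
  obtain ⟨n, q, hq⟩ := Module.Finite.exists_fin' A P
  obtain ⟨h, hh⟩ := exists_ultraPi_eq_of_projective (ψ ∘ₗ q)
  have hker : ∀ᶠ α in (ℱ : Filter X), LinearMap.ker q ≤ LinearMap.ker (h α) :=
    eventually_le_ker_of_fg (Module.FinitePresentation.fg_ker q hq)
      (hh ▸ LinearMap.ker_le_ker_comp q ψ)
  obtain ⟨g, hg⟩ := exists_eventually_comp_eq_of_eventually_ker_le (fun _ => hq) hker
  refine ⟨g, (LinearMap.cancel_right hq).1 ?_⟩
  rw [ultraPi_comp, ultraPi_congr hg, hh]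

end Ultraproduct

section HomUltraMap

variable {X : Type*} (ℱ : Ultrafilter X) (A : Type*) [CommRing A]
variable (M N : X → Type*) [∀ α, AddCommGroup (M α)] [∀ α, Module A (M α)]
  [∀ α, AddCommGroup (N α)] [∀ α, Module A (N α)]

theorem homUltraMap_injective : Function.Injective (homUltraMap ℱ A M N) := by
  refine (injective_iff_map_eq_zero _).2 fun u hu => ?_
  obtain ⟨f, rfl⟩ := Submodule.Quotient.mk_surjective _ u
  rw [Submodule.Quotient.mk_eq_zero, mem_ultraZero]
  exact eventually_eq_zero_of_ultraMap_eq_zero hu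

variable {P : Type*} [AddCommGroup P] [Module A P] [Finite P] [Module.FinitePresentation A P]

theorem homUltraMap_surjective (hM : ∀ α, ∃ p : P →ₗ[A] M α, Function.Surjective p) :
    Function.Surjective (homUltraMap ℱ A M N) := by
  intro φ
  choose p hp using hM
  obtain ⟨g, hg⟩ := exists_ultraPi_eq_of_finitePresentation (φ ∘ₗ ultraPi ℱ p)
  have hker : ∀ᶠ α in (ℱ : Filter X), LinearMap.ker (p α) ≤ LinearMap.ker (g α) :=
    eventually_ker_le_ker_of_ultraPi (hg ▸ LinearMap.ker_le_ker_comp (ultraPi ℱ p) φ)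
  obtain ⟨f, hf⟩ := exists_eventually_comp_eq_of_eventually_ker_le hp hker
  refine ⟨Submodule.Quotient.mk f, (LinearMap.cancel_right (ultraPi_surjective hp)).1 ?_⟩
  calc ultraMap ℱ A f ∘ₗ ultraPi ℱ p
      = ultraPi ℱ fun α => f α ∘ₗ p α := ultraMap_comp_ultraPi f p
    _ = ultraPi ℱ g := ultraPi_congr hf
    _ = φ ∘ₗ ultraPi ℱ p := hg

theorem homUltraMap_bijective_general
    (hM : ∀ α, ∃ p : P →ₗ[A] M α, Function.Surjective p) :
    Function.Bijective (homUltraMap ℱ A M N) :=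
  ⟨homUltraMap_injective ℱ A M N, homUltraMap_surjective ℱ A M N hM⟩

end HomUltraMap

/-- For bounded families of modules over a finite ring, the natural map from
the ultraproduct of the modules of homomorphisms to the module of homomorphisms between the
ultraproducts is an isomorphism. -/
theorem homUltraMap_bijective
    {X : Type*} [Infinite X] (ℱ : Ultrafilter X) (hℱ : ∀ x : X, ℱ ≠ pure x)
    (A : Type*) [CommRing A] [Finite A]
    (M N : X → Type*) [∀ α, AddCommGroup (M α)] [∀ α, Module A (M α)]
    [∀ α, AddCommGroup (N α)] [∀ α, Module A (N α)]
    (s : ℕ) (hMbdd : ∀ α, ∃ f : (Fin s → A) →ₗ[A] M α, Function.Surjective f)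
    (hNbdd : ∀ α, ∃ f : (Fin s → A) →ₗ[A] N α, Function.Surjective f) :
    Function.Bijective (homUltraMap ℱ A M N) :=
  homUltraMap_bijective_general ℱ A M N hMbdd
end

section
/- Let l₀ ≥ 0 and q₀ be integers and let S be a Cohen–Macaulay Noetherian local ring of dimension n ≥ l₀ with maximal ideal 𝔪_S. Let C• be a bounded cochain complex of finite free S-modules which is not exact, and suppose that H^i(C• ⊗_S S/𝔪_S) is non-zero only when q₀ ≤ i ≤ q₀ + l₀. Then the dimension of the S-module H*(C•) = ⊕_i H^i(C•) (i.e. the Krull dimension of S/Ann_S(H*(C•))) is at least dim S − l₀; and if equality holds, then H^i(C•) is non-zero only for i = q₀ + l₀ and the S-module H^{q₀+l₀}(C•) has projective dimension l₀. -/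
open CategoryTheory TensorProduct

/-- The depth of a module over a Noetherian local ring: the supremum of the lengths of
regular sequences on M consisting of elements of the maximal ideal. -/
noncomputable def seqDepth (S : Type) [CommRing S] [IsLocalRing S]
    (M : Type) [AddCommGroup M] [Module S M] : ℕ∞ :=
  sSup {d : ℕ∞ | ∃ rs : List S, (∀ x ∈ rs, x ∈ IsLocalRing.maximalIdeal S) ∧
    RingTheory.Sequence.IsRegular M rs ∧ (rs.length : ℕ∞) = d}

/-- The i+1-st cohomology of a cochain complex (C, d), as the kernel of d (i+1) modulo the
image of d i. -/
abbrev cxCohomology (S : Type) [CommRing S] (C : ℤ → Type) [∀ i, AddCommGroup (C i)]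
    [∀ i, Module S (C i)] (d : ∀ i : ℤ, C i →ₗ[S] C (i + 1)) (i : ℤ) :=
  ↥(LinearMap.ker (d (i + 1))) ⧸
    Submodule.comap (LinearMap.ker (d (i + 1))).subtype (LinearMap.range (d i))

/-- The module M has projective dimension at most n: it admits a projective resolution which
vanishes in degrees above n. -/
def projDimLE (S : Type) [CommRing S] (M : Type) [AddCommGroup M] [Module S M]
    (n : ℕ) : Prop :=
  ∃ P : ProjectiveResolution (ModuleCat.of S M),
    ∀ i : ℕ, n < i → Limits.IsZero (P.complex.X i)

/-- The module M has projective dimension exactly n. -/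
def projDimEq (S : Type) [CommRing S] (M : Type) [AddCommGroup M] [Module S M]
    (n : ℕ) : Prop :=
  projDimLE S M n ∧ ∀ m : ℕ, projDimLE S M m → n ≤ m

/-!
Let `H` be the nonzero cohomology module of least degree, say `q₀ + e`, and let `K` be the cokernel
of the differential entering that degree, so that `H ⊆ K`. By Nakayama's lemma, wherever the fibre
`C ⊗ k` is exact the complex itself is split exact. Hence `0 ≤ e ≤ l₀`, the cokernel of the
differential entering degree `q₀` is projective, and the `e` exact steps from there to degree
`q₀ + e` give `pd K ≤ e`. Dimension shifting in `Ext(k, -)` yields `depth K ≥ depth S - e`, and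
every associated prime of `K`, in particular one of `H`, has coheight at least `depth K`. This gives
the bound, with strict inequality unless `e = l₀`. If `e = l₀`, the complex splits above degree
`q₀ + l₀`, so `H` is the kernel of a map from `K` onto a projective module and `pd H ≤ l₀`; applying
the same estimate to `H` in place of `K` shows that in the case of equality `pd H ≥ l₀`.
-/

section Splice

open Limits

universe v u

variable {A : Type u} [Category.{v} A] [Abelian A] {T : ShortComplex A} (hT : T.ShortExact)
  (Q : ProjectiveResolution T.X₁)

lemma resolution_d_comp_splice : Q.complex.d 1 0 ≫ Q.π.f 0 ≫ T.f = 0 :=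
  (Category.assoc _ _ _).symm.trans
    ((congrArg (· ≫ T.f) Q.complex_d_comp_π_f_zero).trans zero_comp)

lemma splice_comp_g : (Q.π.f 0 ≫ T.f) ≫ T.g = 0 :=
  (Category.assoc _ _ _).trans ((congrArg (Q.π.f 0 ≫ ·) T.zero).trans comp_zero)

/-- The Yoneda splice `⋯ ⟶ Q₁ ⟶ Q₀ ⟶ T.X₂` of a projective resolution `Q` of `T.X₁` with
`T.f : T.X₁ ⟶ T.X₂`; the term `Qᵢ` sits in degree `i + 1`. -/
noncomputable def spliceComplex : ChainComplex A ℕ :=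
  Q.complex.augment (Q.π.f 0 ≫ T.f) (resolution_d_comp_splice Q)

/-- The augmentation of the spliced complex given by `T.g : T.X₂ ⟶ T.X₃`. -/
noncomputable def spliceAugmentation :
    spliceComplex Q ⟶ (ChainComplex.single₀ A).obj T.X₃ :=
  (ChainComplex.toSingle₀Equiv _ _).symm ⟨T.g, splice_comp_g Q⟩

lemma spliceAugmentation_f_zero : (spliceAugmentation Q).f 0 = T.g :=
  ChainComplex.toSingle₀Equiv_symm_apply_f_zero _ _

include hT

lemma spliceComplex_exact_zero :
    (ShortComplex.mk ((spliceComplex Q).d 1 0) T.g (splice_comp_g Q)).Exact := by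
  let α : ShortComplex.mk (Q.π.f 0 ≫ T.f) T.g (splice_comp_g Q) ⟶ T :=
    { τ₁ := Q.π.f 0
      τ₂ := 𝟙 _
      τ₃ := 𝟙 _
      comm₁₂ := (Category.comp_id _).symm
      comm₂₃ := (Category.id_comp _).trans (Category.comp_id _).symm }
  have : Epi α.τ₁ := inferInstanceAs (Epi (Q.π.f 0))
  have : IsIso α.τ₂ := inferInstanceAs (IsIso (𝟙 _))
  have : Mono α.τ₃ := inferInstanceAs (Mono (𝟙 _))
  exact (ShortComplex.exact_iff_of_epi_of_isIso_of_mono α).2 hT.exact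

lemma spliceComplex_exactAt_succ (n : ℕ) : (spliceComplex Q).ExactAt (n + 1) := by
  rw [HomologicalComplex.exactAt_iff' _ (n + 2) (n + 1) n (by simp) (by simp)]
  cases n with
  | succ n => exact Q.exact_succ n
  | zero =>
    let α : ShortComplex.mk (Q.complex.d 1 0) (Q.π.f 0) Q.complex_d_comp_π_f_zero ⟶
        (spliceComplex Q).sc' 2 1 0 :=
      { τ₁ := 𝟙 _
        τ₂ := 𝟙 _
        τ₃ := T.f
        comm₁₂ := (Category.id_comp _).trans (Category.comp_id _).symm
        comm₂₃ := Category.id_comp _ }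
    have : Epi α.τ₁ := inferInstanceAs (Epi (𝟙 _))
    have : IsIso α.τ₂ := inferInstanceAs (IsIso (𝟙 _))
    have : Mono α.τ₃ := hT.mono_f
    exact (ShortComplex.exact_iff_of_epi_of_isIso_of_mono α).1 Q.exact₀

lemma quasiIso_spliceAugmentation : QuasiIso (spliceAugmentation Q) where
  quasiIsoAt n := by
    cases n with
    | succ n =>
      rw [quasiIsoAt_iff_exactAt' _ _ (ChainComplex.exactAt_succ_single_obj _ _)]
      exact spliceComplex_exactAt_succ hT Q n
    | zero =>
      rw [ChainComplex.quasiIsoAt₀_iff, ShortComplex.quasiIso_iff_of_zeros' _ rfl rfl rfl]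
      refine (ShortComplex.exact_and_epi_g_iff_of_iso ?_).2
        ⟨spliceComplex_exact_zero hT Q, hT.epi_g⟩
      refine ShortComplex.isoMk (Iso.refl _) (Iso.refl _) (Iso.refl _) ?_ ?_
      · exact (Category.id_comp _).trans (Category.comp_id _).symm
      · exact (Category.id_comp _).trans
          ((spliceAugmentation_f_zero Q).symm.trans (Category.comp_id _).symm)

/-- The projective resolution of `T.X₃` obtained by splicing a short exact sequence `T` with
projective middle term and a projective resolution of `T.X₁`. -/
noncomputable def spliceResolution [Projective T.X₂] : ProjectiveResolution T.X₃ where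
  complex := spliceComplex Q
  projective
    | 0 => inferInstanceAs (Projective T.X₂)
    | n + 1 => Q.projective n
  π := spliceAugmentation Q
  quasiIso := quasiIso_spliceAugmentation hT Q

end Splice

section ProjectiveDimension

open Limits

universe v u

variable {A : Type u} [Category.{v} A] [Abelian A]

lemma hasProjectiveDimensionLE_of_resolution {X : A} (P : ProjectiveResolution X) (n : ℕ)
    (hP : ∀ i, n < i → IsZero (P.complex.X i)) : HasProjectiveDimensionLE X n := by
  let _ := HasExt.standard A
  refine HasProjectiveDimensionLT.mk fun i hi Y e => ?_
  obtain ⟨f, hf, rfl⟩ := P.extMk_surjective e (i + 1) rfl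
  obtain rfl : f = 0 := (hP i (by omega)).eq_of_src _ _
  exact P.extMk_zero (i + 1) rfl

lemma exists_resolution_of_hasProjectiveDimensionLE [EnoughProjectives A] (n : ℕ) (X : A)
    [hX : HasProjectiveDimensionLE X n] :
    ∃ P : ProjectiveResolution X, ∀ i, n < i → IsZero (P.complex.X i) := by
  induction n generalizing X with
  | zero =>
    have : Projective X := (projective_iff_hasProjectiveDimensionLE_zero X).2 hX
    exact ⟨.self X, fun i hi => HomologicalComplex.isZero_single_obj_X _ _ _ _ hi.ne'⟩
  | succ n ih =>
    let T : ShortComplex A := .mk (kernel.ι (Projective.π X)) (Projective.π X) (by simp)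
    have hT : T.ShortExact :=
      { exact := ShortComplex.exact_kernel _
        mono_f := inferInstanceAs (Mono (kernel.ι _))
        epi_g := inferInstanceAs (Epi (Projective.π X)) }
    have : Projective T.X₂ := inferInstanceAs (Projective (Projective.over X))
    have := (hT.hasProjectiveDimensionLT_X₃_iff n this).1 hX
    obtain ⟨Q, hQ⟩ := ih T.X₁
    refine ⟨spliceResolution hT Q, fun i hi => ?_⟩
    obtain ⟨j, rfl⟩ := Nat.exists_eq_succ_of_ne_zero (Nat.ne_zero_of_lt hi)
    exact hQ j (Nat.lt_of_succ_lt_succ hi)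

lemma projDimLE_iff_hasProjectiveDimensionLE {S M : Type} [CommRing S] [AddCommGroup M]
    [Module S M] {n : ℕ} :
    projDimLE S M n ↔ HasProjectiveDimensionLE (ModuleCat.of S M) n :=
  ⟨fun ⟨P, hP⟩ => hasProjectiveDimensionLE_of_resolution P n hP,
    fun _ => exists_resolution_of_hasProjectiveDimensionLE n _⟩

end ProjectiveDimension

section Coheight

open RingTheory.Sequence Pointwise

universe u v

variable {R : Type u} [CommRing R] [IsNoetherianRing R]

lemma exists_ne_zero_of_isAssociatedPrime {M : Type v} [AddCommGroup M] [Module R M]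
    {p : Ideal R} (hp : IsAssociatedPrime p M) : ∃ m : M, m ≠ 0 ∧ ∀ a ∈ p, a • m = 0 := by
  obtain ⟨hprime, m, rfl⟩ := isAssociatedPrime_iff.1 hp
  refine ⟨m, ?_, fun a ha => (Submodule.mem_bot R).1 (Submodule.mem_colon_singleton.1 ha)⟩
  rintro rfl
  exact hprime.ne_top (by simp [Ideal.eq_top_iff_one, Submodule.mem_colon_singleton])

lemma not_torsionBySet_le_smul_top_of_isAssociatedPrime {M : Type v} [AddCommGroup M] [Module R M]
    [Module.Finite R M] {x : R} (hx : IsSMulRegular M x) (hxJ : x ∈ (⊥ : Ideal R).jacobson)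
    {p : Ideal R} (hp : IsAssociatedPrime p M) :
    ¬ Submodule.torsionBySet R M (p : Set R) ≤ x • (⊤ : Submodule R M) := by
  intro hle
  set N := Submodule.torsionBySet R M (p : Set R)
  have hN : N ≤ (⊥ : Ideal R).jacobson • N := by
    intro n hn
    obtain ⟨m, -, rfl⟩ := (Submodule.mem_smul_pointwise_iff_exists _ _ _).1 (hle hn)
    refine Submodule.smul_mem_smul hxJ ?_
    rw [Submodule.mem_torsionBySet_iff] at hn ⊢
    exact fun a => hx (by simpa only [smul_comm x, smul_zero] using hn a)
  have hbot : N = ⊥ :=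
    Submodule.eq_bot_of_le_smul_of_le_jacobson_bot _ N (IsNoetherian.noetherian N) hN le_rfl
  obtain ⟨m, hm, hpm⟩ := exists_ne_zero_of_isAssociatedPrime hp
  refine hm ((Submodule.mem_bot R).1 (hbot ▸ ?_))
  exact (Submodule.mem_torsionBySet_iff _ _).2 fun a => hpm a a.2

lemma notMem_of_isAssociatedPrime_of_isSMulRegular {M : Type v} [AddCommGroup M] [Module R M]
    {x : R} (hx : IsSMulRegular M x) {p : Ideal R} (hp : IsAssociatedPrime p M) : x ∉ p := by
  obtain ⟨m, hm, hpm⟩ := exists_ne_zero_of_isAssociatedPrime hp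
  exact fun hxp => hm (hx ((hpm x hxp).trans (smul_zero x).symm))

lemma exists_isAssociatedPrime_quotSMulTop {M : Type v} [AddCommGroup M] [Module R M]
    [Module.Finite R M] {x : R} (hx : IsSMulRegular M x) (hxJ : x ∈ (⊥ : Ideal R).jacobson)
    {p : Ideal R} (hp : IsAssociatedPrime p M) :
    ∃ q, IsAssociatedPrime q (QuotSMulTop x M) ∧ p ≤ q ∧ x ∈ q := by
  obtain ⟨n, hnp, hnx⟩ := Set.not_subset.1
    (not_torsionBySet_le_smul_top_of_isAssociatedPrime hx hxJ hp)
  have hn : (x • (⊤ : Submodule R M)).mkQ n ≠ 0 := mt (Submodule.Quotient.mk_eq_zero _).1 hnx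
  obtain ⟨q, hq, hle⟩ := exists_le_isAssociatedPrime_of_isNoetherianRing R _ hn
  refine ⟨q, hq, fun a ha => hle ?_, hle ?_⟩ <;>
    rw [Submodule.mem_colon_singleton, Submodule.mem_bot, ← map_smul]
  · rw [(Submodule.mem_torsionBySet_iff _ _).1 hnp ⟨a, ha⟩, map_zero]
  · exact (Submodule.Quotient.mk_eq_zero _).2 (Submodule.smul_mem_pointwise_smul _ _ _ trivial)

omit [IsNoetherianRing R] in
lemma ringKrullDim_quotient_succ_le {p q : Ideal R} [p.IsPrime] (hpq : p < q) :
    ringKrullDim (R ⧸ q) + 1 ≤ ringKrullDim (R ⧸ p) := by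
  obtain ⟨hle, x, hxq, hxp⟩ := SetLike.lt_iff_le_and_exists.1 hpq
  refine ringKrullDim_succ_le_of_surjective (Ideal.Quotient.factor hle)
    (Ideal.Quotient.factor_surjective hle) (r := Ideal.Quotient.mk p x) ?_ ?_
  · rwa [mem_nonZeroDivisors_iff_ne_zero, Ne, Ideal.Quotient.eq_zero_iff_mem]
  · rwa [Ideal.Quotient.factor_mk, Ideal.Quotient.eq_zero_iff_mem]

lemma length_le_ringKrullDim_quotient_of_isAssociatedPrime (rs : List R)
    (hrs : ∀ x ∈ rs, x ∈ (⊥ : Ideal R).jacobson) (M : Type v) [AddCommGroup M] [Module R M]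
    [Module.Finite R M] (hreg : IsWeaklyRegular M rs) {p : Ideal R} (hp : IsAssociatedPrime p M) :
    (rs.length : WithBot ℕ∞) ≤ ringKrullDim (R ⧸ p) := by
  induction rs generalizing M p with
  | nil =>
    have := hp.isPrime
    simpa using ringKrullDim_nonneg_of_nontrivial
  | cons x rs ih =>
    obtain ⟨hx, hreg⟩ := (isWeaklyRegular_cons_iff M x rs).1 hreg
    obtain ⟨hxJ, hrs⟩ := List.forall_mem_cons.1 hrs
    obtain ⟨q, hq, hpq, hxq⟩ := exists_isAssociatedPrime_quotSMulTop hx hxJ hp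
    have := hp.isPrime
    have hlt : p < q := hpq.lt_of_ne fun h =>
      notMem_of_isAssociatedPrime_of_isSMulRegular hx hp (h ▸ hxq)
    calc ((x :: rs).length : WithBot ℕ∞) = rs.length + 1 := by simp
      _ ≤ ringKrullDim (R ⧸ q) + 1 := by gcongr; exact ih hrs _ hreg hq
      _ ≤ ringKrullDim (R ⧸ p) := ringKrullDim_quotient_succ_le hlt

end Coheight

section ExtVanishing

open Limits Abelian

universe w v u

lemma subsingleton_ext_of_retract {A : Type u} [Category.{v} A] [Abelian A] [HasExt.{w} A]
    {N X Y : A} (r : Retract X Y) {i : ℕ} [Subsingleton (Ext N Y i)] :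
    Subsingleton (Ext N X i) := by
  refine subsingleton_of_forall_eq 0 fun e => ?_
  calc e = (e.comp (.mk₀ r.i) (add_zero i)).comp (.mk₀ r.r) (add_zero i) := by simp
    _ = 0 := by rw [Subsingleton.elim (e.comp (.mk₀ r.i) (add_zero i)) 0, Ext.zero_comp]

variable {R : Type u} [CommRing R] {N : ModuleCat.{u} R}

lemma subsingleton_ext_of_projective {i : ℕ} [Subsingleton (Ext N (ModuleCat.of R R) i)]
    (M : ModuleCat.{u} R) [Module.Finite R M] [Module.Projective R M] :
    Subsingleton (Ext N M i) := by
  obtain ⟨n, f, g, -, -, hfg⟩ := Module.Finite.exists_comp_eq_id_of_projective R M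
  let F : Fin n → ModuleCat.{u} R := fun _ => ModuleCat.of R R
  have : Subsingleton (Ext N (⨁ F) i) :=
    (Ext.addEquivBiproduct N (biproduct.isBilimit F) i).subsingleton
  have : Subsingleton (Ext N (ModuleCat.of R (Fin n → R)) i) :=
    subsingleton_ext_of_retract (.ofIso (ModuleCat.biproductIsoPi F).symm)
  exact subsingleton_ext_of_retract (Y := ModuleCat.of R (Fin n → R))
    { i := ModuleCat.ofHom g
      r := ModuleCat.ofHom f
      retract := ModuleCat.hom_ext hfg }

lemma subsingleton_ext_of_hasProjectiveDimensionLE [IsNoetherianRing R] {m : ℕ}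
    (hN : ∀ i < m, Subsingleton (Ext N (ModuleCat.of R R) i)) {r : ℕ} (M : ModuleCat.{u} R)
    [Module.Finite R M] [hM : HasProjectiveDimensionLE M r] {i : ℕ} (hi : i + r < m) :
    Subsingleton (Ext N M i) := by
  induction r generalizing M i with
  | zero =>
    have := (IsProjective.iff_projective (R := R) M).2
      ((projective_iff_hasProjectiveDimensionLE_zero M).2 hM)
    have := hN i hi
    exact subsingleton_ext_of_projective M
  | succ r ih =>
    obtain ⟨k, p, hp⟩ := Module.Finite.exists_fin' R M
    have hT := LinearMap.shortExact_shortComplexKer hp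
    have : Projective (ModuleCat.of R (Fin k → R)) := inferInstance
    have : HasProjectiveDimensionLE p.shortComplexKer.X₁ r :=
      (hT.hasProjectiveDimensionLT_X₃_iff r this).1 hM
    have := hN i (by omega)
    have hfree : Subsingleton (Ext N p.shortComplexKer.X₂ i) :=
      subsingleton_ext_of_projective (ModuleCat.of R (Fin k → R))
    have hker : Subsingleton (Ext N p.shortComplexKer.X₁ (i + 1)) := ih _ (by omega)
    refine subsingleton_of_forall_eq 0 fun e => ?_
    obtain ⟨e', rfl⟩ := Ext.covariant_sequence_exact₃ N hT e rfl (Subsingleton.elim _ _)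
    rw [Subsingleton.elim e' 0, Ext.zero_comp]

end ExtVanishing

section AuslanderBuchsbaum

open IsLocalRing RingTheory.Sequence

universe u

variable {S : Type u} [CommRing S] [IsLocalRing S] [IsNoetherianRing S]

omit [IsNoetherianRing S] in
lemma maximalIdeal_smul_top_lt_top (M : Type*) [AddCommGroup M] [Module S M] [Module.Finite S M]
    [Nontrivial M] : maximalIdeal S • (⊤ : Submodule S M) < ⊤ :=
  lt_top_iff_ne_top.2 (Submodule.top_ne_ideal_smul_of_le_jacobson_annihilator
    (maximalIdeal_le_jacobson _)).symm

omit [IsNoetherianRing S] in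
lemma support_residueField :
    Module.support S (ResidueField S) = PrimeSpectrum.zeroLocus (maximalIdeal S) := by
  rw [Module.support_eq_zeroLocus]
  exact congrArg (fun I : Ideal S => PrimeSpectrum.zeroLocus (I : Set S))
    (Ideal.annihilator_quotient (I := maximalIdeal S))

/-- The inequality `depth S - pd M ≤ depth M` of the Auslander–Buchsbaum formula. Through the
characterisation of depth by the vanishing of `Ext(k, -)`, it is a dimension shift along a free
resolution of `M`. -/
lemma exists_isRegular_of_hasProjectiveDimensionLE {rs : List S}
    (hrs : ∀ x ∈ rs, x ∈ maximalIdeal S) (hreg : IsRegular S rs) {r : ℕ}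
    (M : Type u) [AddCommGroup M] [Module S M] [Module.Finite S M] [Nontrivial M]
    [HasProjectiveDimensionLE (ModuleCat.of S M) r] :
    ∃ rs' : List S, rs'.length = rs.length - r ∧ (∀ x ∈ rs', x ∈ maximalIdeal S) ∧
      IsRegular M rs' := by
  have hS : ∀ i < rs.length,
      Subsingleton (Abelian.Ext (ModuleCat.of S (ResidueField S)) (ModuleCat.of S S) i) :=
    ModuleCat.subsingleton_ext_of_exists_isRegular (maximalIdeal S) _ support_residueField.le
      (ModuleCat.of S S) (maximalIdeal_smul_top_lt_top S) rs hrs hreg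
  exact ModuleCat.exists_isRegular_of_exists_subsingleton_ext (maximalIdeal S) (rs.length - r)
    (ModuleCat.of S M) (maximalIdeal_smul_top_lt_top M) (ModuleCat.of S (ResidueField S))
    support_residueField
    fun i hi => subsingleton_ext_of_hasProjectiveDimensionLE hS (r := r) _ (by omega)

lemma length_sub_le_ringKrullDim_quotient_of_injective {rs : List S}
    (hrs : ∀ x ∈ rs, x ∈ maximalIdeal S) (hreg : IsRegular S rs) {r : ℕ}
    {M : Type u} [AddCommGroup M] [Module S M] [Module.Finite S M]
    [HasProjectiveDimensionLE (ModuleCat.of S M) r] {N : Type*} [AddCommGroup N] [Module S N]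
    [Nontrivial N] (φ : N →ₗ[S] M) (hφ : Function.Injective φ) {I : Ideal S}
    (hI : I ≤ Module.annihilator S N) :
    ((rs.length - r : ℕ) : WithBot ℕ∞) ≤ ringKrullDim (S ⧸ I) := by
  have := hφ.nontrivial
  obtain ⟨p, hp⟩ := associatedPrimes.nonempty S N
  obtain ⟨rs', hlen, hrs', hreg'⟩ :=
    exists_isRegular_of_hasProjectiveDimensionLE hrs hreg (r := r) M
  have hIp : I ≤ p := hI.trans (Submodule.annihilator_top (R := S) (M := N) ▸ hp.annihilator_le)
  calc ((rs.length - r : ℕ) : WithBot ℕ∞) = rs'.length := by rw [hlen]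
    _ ≤ ringKrullDim (S ⧸ p) :=
      length_le_ringKrullDim_quotient_of_isAssociatedPrime rs'
        (fun x hx => maximalIdeal_le_jacobson _ (hrs' x hx)) M hreg'.toIsWeaklyRegular
        (hp.map_of_injective φ hφ)
    _ ≤ ringKrullDim (S ⧸ I) :=
      ringKrullDim_le_of_surjective (Ideal.Quotient.factor hIp)
        (Ideal.Quotient.factor_surjective hIp)

end AuslanderBuchsbaum

section SeqDepth

open IsLocalRing RingTheory.Sequence

lemma exists_isRegular_of_seqDepth_eq {S : Type} [CommRing S] [IsLocalRing S] {M : Type}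
    [AddCommGroup M] [Module S M] [Nontrivial M] {n : ℕ} (h : seqDepth S M = n) :
    ∃ rs : List S, (∀ x ∈ rs, x ∈ maximalIdeal S) ∧ IsRegular M rs ∧ rs.length = n := by
  let lengths : Set ℕ∞ := {d | ∃ rs : List S, (∀ x ∈ rs, x ∈ maximalIdeal S) ∧
    IsRegular M rs ∧ (rs.length : ℕ∞) = d}
  have : Nonempty lengths := ⟨⟨0, [], by simp, .nil S M, rfl⟩⟩
  have hmem : sSup lengths ∈ lengths :=
    ENat.sSup_mem_of_nonempty_of_lt_top (h.trans_lt (ENat.natCast_lt_top n))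
  obtain ⟨rs, hrs, hreg, hlen⟩ := hmem
  exact ⟨rs, hrs, hreg, Nat.cast_injective (hlen.trans h)⟩

end SeqDepth

section FibreExactness

open LinearMap IsLocalRing

variable {R A B D : Type*} [CommRing R] [AddCommGroup A] [AddCommGroup B] [AddCommGroup D]
  [Module R A] [Module R B] [Module R D] {f : A →ₗ[R] B} {g : B →ₗ[R] D}

lemma rTensor_liftQ_range_injective (hfg : range f ≤ ker g) {K : Type*} [AddCommGroup K]
    [Module R K] (h : ker (g.rTensor K) ≤ range (f.rTensor K)) :
    Function.Injective (((range f).liftQ g hfg).rTensor K) := by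
  rw [injective_iff_map_eq_zero]
  intro x hx
  obtain ⟨y, rfl⟩ := rTensor_surjective K (range f).mkQ_surjective x
  rw [← LinearMap.comp_apply, ← rTensor_comp, Submodule.liftQ_mkQ] at hx
  obtain ⟨z, rfl⟩ := h hx
  rw [← LinearMap.comp_apply, ← rTensor_comp, range_mkQ_comp, rTensor_zero,
    LinearMap.zero_apply]

lemma projective_submodule_of_projective_quotient (N : Submodule R B) [Module.Projective R B]
    [Module.Projective R (B ⧸ N)] : Module.Projective R N := by
  obtain ⟨s, hs⟩ := Module.projective_lifting_property N.mkQ LinearMap.id N.mkQ_surjective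
  have hsplit := ((exact_subtype_mkQ N).split_tfae N.subtype_injective N.mkQ_surjective).out 0 1
  obtain ⟨r, hr⟩ := hsplit.1 ⟨s, hs⟩
  exact .of_split _ r hr

variable [IsLocalRing R] [Module.Finite R B] [Module.Finite R D] [Module.Free R D]

section

variable (hfg : range f ≤ ker g)
  (h : ker (g.rTensor (ResidueField R)) ≤ range (f.rTensor (ResidueField R)))

include h

lemma exists_leftInverse_liftQ_range :
    ∃ r : D →ₗ[R] B ⧸ range f, r ∘ₗ (range f).liftQ g hfg = LinearMap.id :=
  (split_injective_iff_lTensor_residueField_injective _).2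
    ((lTensor_inj_iff_rTensor_inj _ _).2 (rTensor_liftQ_range_injective hfg h))

include hfg

lemma ker_le_range_of_residueField : ker g ≤ range f := by
  obtain ⟨r, hr⟩ := exists_leftInverse_liftQ_range hfg h
  intro x hx
  rw [← Submodule.ker_mkQ (range f), mem_ker]
  calc (range f).mkQ x = r ((range f).liftQ g hfg ((range f).mkQ x)) :=
        (DFunLike.congr_fun hr _).symm
    _ = r (g x) := rfl
    _ = 0 := by rw [mem_ker.1 hx, map_zero]

lemma projective_range_of_residueField [Module.Projective R B] :
    Module.Projective R (range f) := by
  obtain ⟨r, hr⟩ := exists_leftInverse_liftQ_range hfg h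
  have : Module.Projective R (B ⧸ range f) := .of_split _ r hr
  exact projective_submodule_of_projective_quotient _

lemma projective_quotient_range_of_residueField : Module.Projective R (D ⧸ range g) := by
  have : Module.Free R (D ⧸ range g) :=
    Module.free_of_lTensor_residueField_injective ((range f).liftQ g hfg) (range g).mkQ
      (range g).mkQ_surjective
      (by rw [exact_iff, Submodule.ker_mkQ, Submodule.range_liftQ])
      ((lTensor_inj_iff_rTensor_inj _ _).2 (rTensor_liftQ_range_injective hfg h))
  infer_instance

end

end FibreExactness

section Cohomology

open LinearMap

section

universe u v

variable {R : Type u} {A B D : Type v} [CommRing R] [AddCommGroup A] [AddCommGroup B]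
  [AddCommGroup D] [Module R A] [Module R B] [Module R D] {f : A →ₗ[R] B} {g : B →ₗ[R] D}

lemma hasProjectiveDimensionLE_quotient_range_succ (hfg : range f = ker g) [Module.Projective R D]
    {e : ℕ} [HasProjectiveDimensionLE (ModuleCat.of R (B ⧸ range f)) e] :
    HasProjectiveDimensionLE (ModuleCat.of R (D ⧸ range g)) (e + 1) := by
  let φ := (range f).liftQ g hfg.le
  have hexact : Function.Exact φ (range g).mkQ := by
    rw [exact_iff, Submodule.ker_mkQ, Submodule.range_liftQ]
  have hT : (ModuleCat.shortComplexOfCompEqZero φ (range g).mkQ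
      hexact.linearMap_comp_eq_zero).ShortExact :=
    ModuleCat.shortComplex_shortExact _ hexact
      (ker_eq_bot.1 (Submodule.ker_liftQ_eq_bot _ _ _ hfg.ge)) (range g).mkQ_surjective
  have hD : Projective (ModuleCat.of R D) := inferInstance
  exact (hT.hasProjectiveDimensionLT_X₃_iff e hD).2 ‹_›

end

variable {S : Type} [CommRing S] {C : ℤ → Type} [∀ i, AddCommGroup (C i)] [∀ i, Module S (C i)]
  {d : ∀ i : ℤ, C i →ₗ[S] C (i + 1)}

lemma subsingleton_cxCohomology_iff {i : ℤ} :
    Subsingleton (cxCohomology S C d i) ↔ ker (d (i + 1)) ≤ range (d i) := by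
  rw [Submodule.Quotient.subsingleton_iff, Submodule.comap_subtype_eq_top]

variable (d) in
/-- The inclusion of the cohomology `cxCohomology S C d i` into the cokernel of `d i`. -/
def cxCohomologyInclusion (i : ℤ) : cxCohomology S C d i →ₗ[S] C (i + 1) ⧸ range (d i) :=
  Submodule.mapQ _ _ (ker (d (i + 1))).subtype le_rfl

lemma cxCohomologyInclusion_injective (i : ℤ) : Function.Injective (cxCohomologyInclusion d i) :=
  ker_eq_bot.1 (Submodule.ker_liftQ_eq_bot _ _ _ (by simp [ker_comp]))

lemma hasProjectiveDimensionLE_cxCohomology {i : ℤ} (hd : d (i + 1) ∘ₗ d i = 0)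
    [Module.Projective S (range (d (i + 1)))] {e : ℕ}
    [HasProjectiveDimensionLE (ModuleCat.of S (C (i + 1) ⧸ range (d i))) e] :
    HasProjectiveDimensionLE (ModuleCat.of S (cxCohomology S C d i)) e := by
  let π := (range (d i)).liftQ (d (i + 1)).rangeRestrict
    ((range_le_ker_iff.2 hd).trans_eq (ker_rangeRestrict _).symm)
  have hexact : Function.Exact (cxCohomologyInclusion d i) π := by
    rw [exact_iff, Submodule.ker_liftQ, ker_rangeRestrict, cxCohomologyInclusion,
      Submodule.range_mapQ, Submodule.range_subtype]
  have hsurj : Function.Surjective π :=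
    range_eq_top.1 (by rw [Submodule.range_liftQ, range_rangeRestrict])
  have hT : (ModuleCat.shortComplexOfCompEqZero (cxCohomologyInclusion d i) π
      hexact.linearMap_comp_eq_zero).ShortExact :=
    ModuleCat.shortComplex_shortExact _ hexact (cxCohomologyInclusion_injective i) hsurj
  have : Projective (ModuleCat.of S (range (d (i + 1)))) := inferInstance
  exact hT.hasProjectiveDimensionLT_X₁ _ ‹_› (hasProjectiveDimensionLT_of_ge _ 1 _ (by omega))

end Cohomology

section FibreConcentration

open LinearMap IsLocalRing

variable {S : Type} [CommRing S] [IsLocalRing S] {C : ℤ → Type} [∀ i, AddCommGroup (C i)]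
  [∀ i, Module S (C i)] [∀ i, Module.Free S (C i)] [∀ i, Module.Finite S (C i)]
  {d : ∀ i : ℤ, C i →ₗ[S] C (i + 1)} (hdd : ∀ i : ℤ, d (i + 1) ∘ₗ d i = 0)

include hdd

lemma hasProjectiveDimensionLE_quotient_range {q₀ : ℤ}
    (hred : ∀ i : ℤ, i + 1 < q₀ →
      ker ((d (i + 1)).rTensor (ResidueField S)) ≤ range ((d i).rTensor (ResidueField S)))
    (e : ℕ) {i : ℤ} (hi : i + 1 ≤ q₀ + e) (hexact : ∀ j < i, ker (d (j + 1)) ≤ range (d j)) :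
    HasProjectiveDimensionLE (ModuleCat.of S (C (i + 1) ⧸ range (d i))) e := by
  obtain ⟨i, rfl⟩ : ∃ k, i = k + 1 := ⟨i - 1, by omega⟩
  have hle : range (d i) ≤ ker (d (i + 1)) := range_le_ker_iff.2 (hdd i)
  induction e generalizing i with
  | zero =>
    have := projective_quotient_range_of_residueField hle (hred i (by lia))
    exact (projective_iff_hasProjectiveDimensionLE_zero _).1 inferInstance
  | succ e ih =>
    obtain ⟨i, rfl⟩ : ∃ k, i = k + 1 := ⟨i - 1, by omega⟩
    have := ih i (by lia) (fun j hj => hexact j (by omega)) (range_le_ker_iff.2 (hdd i))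
    exact hasProjectiveDimensionLE_quotient_range_succ (hle.antisymm (hexact _ (by omega)))

lemma subsingleton_cxCohomology_of_residueField {i : ℤ}
    (hred : ker ((d (i + 1)).rTensor (ResidueField S)) ≤ range ((d i).rTensor (ResidueField S))) :
    Subsingleton (cxCohomology S C d i) :=
  subsingleton_cxCohomology_iff.2 (ker_le_range_of_residueField (range_le_ker_iff.2 (hdd i)) hred)

lemma exists_least_nontrivial_cxCohomology {l₀ : ℕ} {q₀ : ℤ}
    (hred : ∀ i : ℤ, (i + 1 < q₀ ∨ q₀ + l₀ < i + 1) →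
      ker ((d (i + 1)).rTensor (ResidueField S)) ≤ range ((d i).rTensor (ResidueField S)))
    (hne : ∃ i : ℤ, Nontrivial (cxCohomology S C d i)) :
    ∃ e ≤ l₀, Nontrivial (cxCohomology S C d (q₀ + e - 1)) ∧
      ∀ j < q₀ + e - 1, Subsingleton (cxCohomology S C d j) := by
  have hdeg : ∀ i, Nontrivial (cxCohomology S C d i) → q₀ ≤ i + 1 ∧ i + 1 ≤ q₀ + l₀ := by
    intro i hi
    by_contra hout
    exact not_subsingleton _ (subsingleton_cxCohomology_of_residueField hdd (hred i (by omega)))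
  obtain ⟨i, hi, hmin⟩ :=
    Int.exists_least_of_bdd ⟨q₀ - 1, fun j hj => by linarith [(hdeg j hj).1]⟩ hne
  obtain ⟨e, rfl⟩ : ∃ e : ℕ, i = q₀ + e - 1 :=
    ⟨(i + 1 - q₀).toNat, by have := (hdeg i hi).1; omega⟩
  refine ⟨e, by have := (hdeg _ hi).2; omega, hi, fun j hj => ?_⟩
  exact not_nontrivial_iff_subsingleton.1 fun h => (hmin j h).not_gt hj

end FibreConcentration

section Main

open LinearMap IsLocalRing

theorem cohomology_dimension_bound_general
    (S : Type) [CommRing S] [IsLocalRing S] [IsNoetherianRing S]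
    (l₀ n : ℕ) (q₀ : ℤ) (hln : l₀ ≤ n)
    (hdepth : seqDepth S S = (n : ℕ∞))
    (C : ℤ → Type) [∀ i, AddCommGroup (C i)] [∀ i, Module S (C i)]
    [∀ i, Module.Free S (C i)] [∀ i, Module.Finite S (C i)]
    (d : ∀ i : ℤ, C i →ₗ[S] C (i + 1))
    (hdd : ∀ i : ℤ, (d (i + 1)) ∘ₗ (d i) = 0)
    (hne : ∃ i : ℤ, Nontrivial (cxCohomology S C d i))
    (hred : ∀ i : ℤ, (i + 1 < q₀ ∨ q₀ + (l₀ : ℤ) < i + 1) →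
      ker ((d (i + 1)).rTensor (ResidueField S)) ≤
        range ((d i).rTensor (ResidueField S))) :
    (((n - l₀ : ℕ) : WithBot ℕ∞) ≤
        ringKrullDim (S ⧸ ⨅ i : ℤ, Module.annihilator S (cxCohomology S C d i))) ∧
      (ringKrullDim (S ⧸ ⨅ i : ℤ, Module.annihilator S (cxCohomology S C d i)) =
          ((n - l₀ : ℕ) : WithBot ℕ∞) →
        (∀ i : ℤ, i + 1 ≠ q₀ + (l₀ : ℤ) → Subsingleton (cxCohomology S C d i)) ∧
          projDimEq S (cxCohomology S C d (q₀ + (l₀ : ℤ) - 1)) l₀) := by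
  obtain ⟨rs, hrs, hreg, rfl⟩ := exists_isRegular_of_seqDepth_eq hdepth
  obtain ⟨e, hel, hH, hmin⟩ := exists_least_nontrivial_cxCohomology hdd hred hne
  have hcoker := hasProjectiveDimensionLE_quotient_range hdd (fun i hi => hred i (.inl hi)) e
    (i := q₀ + e - 1) (by omega) fun j hj => subsingleton_cxCohomology_iff.1 (hmin j hj)
  have hann := iInf_le (fun i => Module.annihilator S (cxCohomology S C d i)) (q₀ + e - 1)
  have hbound := length_sub_le_ringKrullDim_quotient_of_injective hrs hreg (r := e)
    (cxCohomologyInclusion d (q₀ + e - 1)) (cxCohomologyInclusion_injective _) hann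
  refine ⟨le_trans (Nat.cast_le.2 (by omega)) hbound, fun heq => ?_⟩
  obtain rfl : e = l₀ := by
    have := Nat.cast_le.1 (hbound.trans_eq heq)
    omega
  refine ⟨fun i hi => ?_, ?_, fun r hr => ?_⟩
  · rcases lt_or_ge i (q₀ + e - 1) with hlt | hge
    · exact hmin i hlt
    · exact subsingleton_cxCohomology_of_residueField hdd (hred i (.inr (by omega)))
  · have := projective_range_of_residueField (range_le_ker_iff.2 (hdd _))
      (hred (q₀ + e - 1 + 1) (.inr (by omega)))
    exact projDimLE_iff_hasProjectiveDimensionLE.2 (hasProjectiveDimensionLE_cxCohomology (hdd _))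
  · have := projDimLE_iff_hasProjectiveDimensionLE.1 hr
    have := Nat.cast_le.1 ((length_sub_le_ringKrullDim_quotient_of_injective hrs hreg (r := r) .id
      Function.injective_id hann).trans_eq heq)
    omega

end Main

/-- Let S be a Cohen–Macaulay Noetherian local ring of dimension n ≥ l₀ and
C a bounded, non-exact cochain complex of finite free S-modules whose reduction modulo the
maximal ideal has cohomology concentrated in degrees [q₀, q₀ + l₀].  Then the dimension of the
total cohomology of C is at least dim S − l₀, and in case of equality the cohomology of C is
concentrated in degree q₀ + l₀, where it has projective dimension l₀. -/
theorem cohomology_dimension_bound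
    (S : Type) [CommRing S] [IsLocalRing S] [IsNoetherianRing S]
    (l₀ n : ℕ) (q₀ : ℤ) (hln : l₀ ≤ n)
    (hdim : ringKrullDim S = (n : WithBot (WithTop ℕ)))
    (hCM : seqDepth S S = (n : ℕ∞))
    (C : ℤ → Type) [∀ i, AddCommGroup (C i)] [∀ i, Module S (C i)]
    [∀ i, Module.Free S (C i)] [∀ i, Module.Finite S (C i)]
    (d : ∀ i : ℤ, C i →ₗ[S] C (i + 1))
    (hdd : ∀ i : ℤ, (d (i + 1)) ∘ₗ (d i) = 0)
    (hbdd : ∃ a b : ℤ, ∀ i : ℤ, (i < a ∨ b < i) → Subsingleton (C i))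
    (hne : ∃ i : ℤ, Nontrivial (cxCohomology S C d i))
    (hred : ∀ i : ℤ, (i + 1 < q₀ ∨ q₀ + (l₀ : ℤ) < i + 1) →
      LinearMap.ker (TensorProduct.map (d (i + 1))
          (LinearMap.id : IsLocalRing.ResidueField S →ₗ[S] IsLocalRing.ResidueField S)) ≤
        LinearMap.range (TensorProduct.map (d i)
          (LinearMap.id : IsLocalRing.ResidueField S →ₗ[S] IsLocalRing.ResidueField S))) :
    (((n - l₀ : ℕ) : WithBot (WithTop ℕ)) ≤
        ringKrullDim (S ⧸ ⨅ i : ℤ, Module.annihilator S (cxCohomology S C d i))) ∧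
      (ringKrullDim (S ⧸ ⨅ i : ℤ, Module.annihilator S (cxCohomology S C d i)) =
          ((n - l₀ : ℕ) : WithBot (WithTop ℕ)) →
        (∀ i : ℤ, i + 1 ≠ q₀ + (l₀ : ℤ) → Subsingleton (cxCohomology S C d i)) ∧
          projDimEq S (cxCohomology S C d (q₀ + (l₀ : ℤ) - 1)) l₀) :=
  cohomology_dimension_bound_general S l₀ n q₀ hln hCM C d hdd hne hred
end

section
/- (Formal implicit function theorem.) Let E be a field of characteristic 0 and R a regular Noetherian local E-algebra. Then for every complete Noetherian local E-algebra T with a nilpotent ideal I ⊆ T and every local E-algebra homomorphism φ : R → T/I, there exists a local E-algebra homomorphism ψ : R → T whose composite with the quotient map T → T/I equals φ. -/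
/-!
Formal smoothness of the residue field `k = R ⧸ 𝔪` over `E` gives a coefficient field `κ : k → R̂`
in the `𝔪`-adic completion. A relation between the generators of `𝔪` with a unit coefficient would
make fewer elements generate an ideal with radical `𝔪`, so for `dim R` generators there is none and
`k[X] ⧸ (X)ⁿ ≃ R̂ ⧸ 𝔪ⁿR̂` for all `n`. Hence an `E`-algebra map from `R̂` to an adically complete
ring is the same as one from `k` together with arbitrary topologically nilpotent images of the
generators; the former lifts from `T ⧸ I` to `T` by formal smoothness, the latter trivially.
-/

open MvPolynomial

section Polynomials

variable {R S σ : Type*} [CommRing R] [CommRing S]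

theorem eval_mul_of_isHomogeneous {F : MvPolynomial σ R} {n : ℕ} (hF : F.IsHomogeneous n)
    (c : R) (x : σ → R) : eval (fun i => c * x i) F = c ^ n * eval x F := by
  rw [eval_eq, eval_eq, Finset.mul_sum]
  refine Finset.sum_congr rfl fun d hd => ?_
  simp only [mul_pow, Finset.prod_mul_distrib, Finset.prod_pow_eq_pow_sum,
    ← hF.degree_eq_sum_deg_support hd]
  ring

theorem mem_mul_span_range_pow_iff_exists_isHomogeneous {J : Ideal R} {x : σ → R} {n : ℕ} {y : R} :
    y ∈ J * Ideal.span (Set.range x) ^ n ↔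
      ∃ F : MvPolynomial σ R, F.IsHomogeneous n ∧ (∀ d, coeff d F ∈ J) ∧ eval x F = y := by
  constructor
  · intro hy
    induction hy using Submodule.mul_induction_on' with
    | mem_mul_mem a ha b hb =>
      obtain ⟨F, hF, rfl⟩ := (Ideal.mem_span_pow_iff_exists_isHomogeneous x b).mp hb
      refine ⟨C a * F, by simpa using (isHomogeneous_C σ a).mul hF, fun d => ?_, by simp⟩
      rw [coeff_C_mul]
      exact J.mul_mem_right _ ha
    | add a _ b _ iha ihb =>
      obtain ⟨F, hF, hFJ, rfl⟩ := iha
      obtain ⟨G, hG, hGJ, rfl⟩ := ihb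
      exact ⟨F + G, hF.add hG, fun d => by simpa using J.add_mem (hFJ d) (hGJ d), by simp⟩
  · rintro ⟨F, hF, hFJ, rfl⟩
    rw [eval_eq]
    refine Ideal.sum_mem _ fun d hd => Ideal.mul_mem_mul (hFJ d) ?_
    rw [hF.degree_eq_sum_deg_support hd, ← Finset.prod_pow_eq_pow_sum]
    exact Ideal.prod_mem_prod fun i _ =>
      Ideal.pow_mem_pow (Ideal.subset_span (Set.mem_range_self i)) _

theorem exists_isHomogeneous_map_eq {f : R →+* S} (hf : Function.Surjective f)
    {G : MvPolynomial σ S} {n : ℕ} (hG : G.IsHomogeneous n) :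
    ∃ F : MvPolynomial σ R, F.IsHomogeneous n ∧ map f F = G := by
  obtain ⟨F, rfl⟩ := map_surjective f hf G
  refine ⟨homogeneousComponent n F, homogeneousComponent_isHomogeneous n F, ?_⟩
  ext d
  rw [coeff_map, coeff_homogeneousComponent]
  split_ifs with hd
  · rw [coeff_map]
  · rw [map_zero, hG.coeff_eq_zero hd]

theorem sub_homogeneousComponent_mem_pow_succ_idealOfVars {p : MvPolynomial σ R} {n : ℕ}
    (hp : p ∈ idealOfVars σ R ^ n) : p - homogeneousComponent n p ∈ idealOfVars σ R ^ (n + 1) := by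
  rw [mem_pow_idealOfVars_iff'] at hp ⊢
  intro d hd
  rw [coeff_sub, coeff_homogeneousComponent]
  split_ifs with hdn
  · exact sub_self _
  · rw [hp d (by omega), sub_zero]

theorem map_mem_pow_of_mem_pow_idealOfVars {f : MvPolynomial σ R →+* S} {J : Ideal S}
    (hf : ∀ i, f (X i) ∈ J) {p : MvPolynomial σ R} {n : ℕ} (hp : p ∈ idealOfVars σ R ^ n) :
    f p ∈ J ^ n := by
  have hJ : idealOfVars σ R ≤ J.comap f := Ideal.span_le.mpr (Set.range_subset_iff.mpr hf)
  exact Ideal.le_comap_pow f n (Ideal.pow_right_mono hJ n hp)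

end Polynomials

/-- A family `x` generating the ideal `I` is a quasi-regular system if it satisfies no nontrivial
homogeneous relation modulo `I`; that is, `(R ⧸ I)[X] → gr_I R`, `X i ↦ x i`, is an isomorphism. -/
structure IsQuasiRegularSystem {R σ : Type*} [CommRing R] (I : Ideal R) (x : σ → R) : Prop where
  span_range : Ideal.span (Set.range x) = I
  coeff_mem {n : ℕ} {F : MvPolynomial σ R} (hF : F.IsHomogeneous n)
    (h : eval x F ∈ I ^ (n + 1)) (d : σ →₀ ℕ) : coeff d F ∈ I

namespace IsQuasiRegularSystem

variable {R σ : Type*} [CommRing R] {I : Ideal R} {x : σ → R}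

theorem mem (hx : IsQuasiRegularSystem I x) (i : σ) : x i ∈ I :=
  hx.span_range ▸ Ideal.subset_span (Set.mem_range_self i)

theorem of_eval_eq_zero (hx : Ideal.span (Set.range x) = I)
    (h : ∀ (n : ℕ) (F : MvPolynomial σ R), F.IsHomogeneous n → eval x F = 0 →
      ∀ d, coeff d F ∈ I) : IsQuasiRegularSystem I x where
  span_range := hx
  coeff_mem {n F} hF hFx d := by
    subst hx
    rw [pow_succ', mem_mul_span_range_pow_iff_exists_isHomogeneous] at hFx
    obtain ⟨G, hG, hGI, hGF⟩ := hFx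
    have hsub := h n (F - G) (hF.sub hG) (by rw [map_sub, hGF, sub_self]) d
    rw [coeff_sub] at hsub
    exact (Submodule.sub_mem_iff_left _ (hGI d)).mp hsub

end IsQuasiRegularSystem

section CoefficientRing

variable {E S k σ : Type*} [CommRing E] [CommRing S] [Algebra E S] [CommRing k] [Algebra E k]
  {𝔫 : Ideal S} {x : σ → S} {κ : k →ₐ[E] S}

theorem aevalTower_eq_eval_map (p : MvPolynomial σ k) :
    aevalTower κ x p = eval x (map (κ : k →+* S) p) := by
  rw [eval_map]
  rfl

theorem exists_sub_aevalTower_mem_pow (hx : Ideal.span (Set.range x) = 𝔫)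
    (hκ : Function.Surjective ((Ideal.Quotient.mkₐ E 𝔫).comp κ)) (N : ℕ) (s : S) :
    ∃ p : MvPolynomial σ k, s - aevalTower κ x p ∈ 𝔫 ^ N := by
  induction N with
  | zero => exact ⟨0, by simp⟩
  | succ N ih =>
    obtain ⟨p, hp⟩ := ih
    subst hx
    obtain ⟨F, hF, hFp⟩ := (Ideal.mem_span_pow_iff_exists_isHomogeneous x _).mp hp
    obtain ⟨q, hq, hqF⟩ := exists_isHomogeneous_map_eq
      (f := ((Ideal.Quotient.mkₐ E (Ideal.span (Set.range x))).comp κ : k →+* _)) hκ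
      (hF.map (Ideal.Quotient.mk (Ideal.span (Set.range x))))
    refine ⟨p + q, ?_⟩
    rw [map_add, ← sub_sub, ← hFp, aevalTower_eq_eval_map q, ← map_sub, pow_succ',
      mem_mul_span_range_pow_iff_exists_isHomogeneous]
    refine ⟨_, hF.sub (hq.map _), fun d => ?_, rfl⟩
    have hcoeff := congrArg (coeff d) hqF
    rw [coeff_map, coeff_map] at hcoeff
    rw [coeff_sub, coeff_map, ← Ideal.Quotient.eq, ← hcoeff]
    rfl

theorem aevalTower_mem_pow_iff (hx : IsQuasiRegularSystem 𝔫 x)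
    (hκ : Function.Injective ((Ideal.Quotient.mkₐ E 𝔫).comp κ)) {p : MvPolynomial σ k} {N : ℕ} :
    aevalTower κ x p ∈ 𝔫 ^ N ↔ p ∈ idealOfVars σ k ^ N := by
  have of_mem {q : MvPolynomial σ k} {n : ℕ} (hq : q ∈ idealOfVars σ k ^ n) :
      aevalTower κ x q ∈ 𝔫 ^ n :=
    map_mem_pow_of_mem_pow_idealOfVars (f := (aevalTower κ x : MvPolynomial σ k →+* S))
      (fun i => by simpa using hx.mem i) hq
  refine ⟨fun hp => ?_, of_mem⟩
  induction N with
  | zero => simp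
  | succ N ih =>
    have hsub := sub_homogeneousComponent_mem_pow_succ_idealOfVars
      (ih (Ideal.pow_le_pow_right N.le_succ hp))
    set q := homogeneousComponent N p
    have hqN : aevalTower κ x q ∈ 𝔫 ^ (N + 1) := by
      have := sub_mem hp (of_mem hsub)
      rwa [map_sub, sub_sub_cancel] at this
    rw [aevalTower_eq_eval_map] at hqN
    have hq0 : q = 0 := by
      ext d
      have hd := hx.coeff_mem ((homogeneousComponent_isHomogeneous N p).map _) hqN d
      rw [coeff_map] at hd
      rw [coeff_zero]
      exact (injective_iff_map_eq_zero _).mp hκ _ (Ideal.Quotient.eq_zero_iff_mem.mpr hd)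
    rwa [hq0, sub_zero] at hsub

theorem exists_algHom_comp_aevalTower_eq {T : Type*} [CommRing T] [Algebra E T] {𝔞 : Ideal T}
    [IsAdicComplete 𝔞 T] (hx : IsQuasiRegularSystem 𝔫 x)
    (hκ : Function.Bijective ((Ideal.Quotient.mkₐ E 𝔫).comp κ))
    {h : MvPolynomial σ k →ₐ[E] T} (hX : ∀ i, h (X i) ∈ 𝔞) :
    ∃ ψ : S →ₐ[E] T, ψ.comp (aevalTower κ x) = h := by
  let γ (n : ℕ) : MvPolynomial σ k →ₐ[E] S ⧸ 𝔫 ^ n :=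
    (Ideal.Quotient.mkₐ E (𝔫 ^ n)).comp (aevalTower κ x)
  have hγ (n : ℕ) : Function.Surjective (γ n) := fun y => by
    obtain ⟨s, rfl⟩ := Ideal.Quotient.mk_surjective y
    obtain ⟨p, hp⟩ := exists_sub_aevalTower_mem_pow hx.span_range hκ.surjective n s
    exact ⟨p, ((Ideal.Quotient.eq).mpr hp).symm⟩
  have hker (n : ℕ) : RingHom.ker (γ n).toRingHom ≤
      RingHom.ker ((Ideal.Quotient.mkₐ E (𝔞 ^ n)).comp h).toRingHom := fun p hp =>
    Ideal.Quotient.eq_zero_iff_mem.mpr <|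
      map_mem_pow_of_mem_pow_idealOfVars (f := (h : MvPolynomial σ k →+* T)) hX <|
        (aevalTower_mem_pow_iff hx hκ.injective).mp (Ideal.Quotient.eq_zero_iff_mem.mp hp)
  let f (n : ℕ) : S →ₐ[E] T ⧸ 𝔞 ^ n :=
    ((γ n).liftOfSurjective (hγ n) _ (hker n)).comp (Ideal.Quotient.mkₐ E (𝔫 ^ n))
  have f_eq {n : ℕ} {s : S} {p : MvPolynomial σ k} (hp : s - aevalTower κ x p ∈ 𝔫 ^ n) :
      f n s = Ideal.Quotient.mk (𝔞 ^ n) (h p) := by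
    have hs : Ideal.Quotient.mkₐ E (𝔫 ^ n) s = γ n p := Ideal.Quotient.eq.mpr hp
    rw [AlgHom.comp_apply, hs, AlgHom.liftOfSurjective_apply]
    rfl
  have hf {m n : ℕ} (hle : m ≤ n) :
      (Ideal.Quotient.factorₐ E (Ideal.pow_le_pow_right hle)).comp (f n) = f m := by
    ext s
    obtain ⟨p, hp⟩ := exists_sub_aevalTower_mem_pow hx.span_range hκ.surjective n s
    rw [AlgHom.comp_apply, f_eq hp, f_eq (Ideal.pow_le_pow_right hle hp)]
    rfl
  refine ⟨IsAdicComplete.liftAlgHom 𝔞 f hf, DFunLike.coe_injective <|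
    IsHausdorff.funext' 𝔞 fun n p => ?_⟩
  rw [AlgHom.comp_apply, IsAdicComplete.mk_liftAlgHom]
  exact f_eq (by simp)

theorem algHom_eq_of_comp_aevalTower_eq {B : Type*} [CommRing B] [Algebra E B] {𝔟 : Ideal B}
    [IsHausdorff 𝔟 B] (hx : Ideal.span (Set.range x) = 𝔫)
    (hκ : Function.Surjective ((Ideal.Quotient.mkₐ E 𝔫).comp κ)) {f g : S →ₐ[E] B}
    (hf : ∀ i, f (x i) ∈ 𝔟) (h : f.comp (aevalTower κ x) = g.comp (aevalTower κ x)) : f = g := by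
  have hfx (i : σ) : f (x i) = g (x i) := by simpa using DFunLike.congr_fun h (X i)
  have map_mem {e : S →ₐ[E] B} (he : ∀ i, e (x i) ∈ 𝔟) {n : ℕ} {s : S} (hs : s ∈ 𝔫 ^ n) :
      e s ∈ 𝔟 ^ n := by
    have hle : 𝔫 ≤ 𝔟.comap e := hx ▸ Ideal.span_le.mpr (Set.range_subset_iff.mpr he)
    exact Ideal.le_comap_pow e n (Ideal.pow_right_mono hle n hs)
  refine DFunLike.coe_injective <| IsHausdorff.funext' 𝔟 fun n s => ?_
  obtain ⟨p, hp⟩ := exists_sub_aevalTower_mem_pow hx hκ n s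
  have hsub := sub_mem (map_mem hf hp) (map_mem (fun i => hfx i ▸ hf i) hp)
  have hfp : f (aevalTower κ x p) = g (aevalTower κ x p) := DFunLike.congr_fun h p
  rwa [map_sub, map_sub, hfp, sub_sub_sub_cancel_right, ← Ideal.Quotient.eq] at hsub

theorem exists_lift_of_bijective {T : Type*} [CommRing T] [Algebra E T] {𝔞 I : Ideal T}
    [IsAdicComplete 𝔞 T] [IsAdicComplete I T]
    [IsHausdorff (𝔞.map (Ideal.Quotient.mk I)) (T ⧸ I)] [Algebra.FormallySmooth E k]
    (hx : IsQuasiRegularSystem 𝔫 x)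
    (hκ : Function.Bijective ((Ideal.Quotient.mkₐ E 𝔫).comp κ)) (φ : S →ₐ[E] T ⧸ I)
    (hφ : ∀ i, φ (x i) ∈ 𝔞.map (Ideal.Quotient.mk I)) :
    ∃ ψ : S →ₐ[E] T, (Ideal.Quotient.mkₐ E I).comp ψ = φ := by
  obtain ⟨lam, hlam⟩ :=
    Algebra.FormallySmooth.exists_mkₐ_comp_eq_of_isAdicComplete (φ.comp κ)
  choose t ht htx using fun i =>
    (Ideal.mem_map_iff_of_surjective _ Ideal.Quotient.mk_surjective).mp (hφ i)
  obtain ⟨ψ, hψ⟩ := exists_algHom_comp_aevalTower_eq (𝔞 := 𝔞) hx hκ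
    (h := aevalTower lam t) (fun i => by simpa using ht i)
  refine ⟨ψ, (algHom_eq_of_comp_aevalTower_eq hx.span_range hκ.surjective hφ ?_).symm⟩
  rw [AlgHom.comp_assoc, hψ]
  refine algHom_ext' ?_ fun i => ?_
  · ext c
    simpa using (DFunLike.congr_fun hlam c).symm
  · simp [htx]

end CoefficientRing

section Completion

namespace IsQuasiRegularSystem

variable {R S σ : Type*} [CommRing R] [CommRing S] {I : Ideal R} {x : σ → R} {f : R →+* S}

theorem map (hx : IsQuasiRegularSystem I x) (hcomap : ∀ n, (I.map f ^ n).comap f ≤ I ^ n)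
    (hf : Function.Surjective ((Ideal.Quotient.mk (I.map f)).comp f)) :
    IsQuasiRegularSystem (I.map f) (f ∘ x) := by
  have hspan : Ideal.span (Set.range (f ∘ x)) = I.map f := by
    rw [← hx.span_range, Ideal.map_span, Set.range_comp]
  refine ⟨hspan, fun {n F} hF hFx d => ?_⟩
  obtain ⟨G, hG, hGF⟩ := exists_isHomogeneous_map_eq hf (hF.map (Ideal.Quotient.mk (I.map f)))
  have hcoeff (d : σ →₀ ℕ) : coeff d (F - MvPolynomial.map f G) ∈ I.map f := by
    have := congrArg (coeff d) hGF
    rw [coeff_map, coeff_map] at this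
    rw [coeff_sub, coeff_map, ← Ideal.Quotient.eq, ← this]
    rfl
  have hsub : eval (f ∘ x) (F - MvPolynomial.map f G) ∈ I.map f ^ (n + 1) := by
    rw [pow_succ']
    nth_rw 2 [← hspan]
    exact mem_mul_span_range_pow_iff_exists_isHomogeneous.mpr
      ⟨_, hF.sub (hG.map f), hcoeff, rfl⟩
  have hGx : eval x G ∈ I ^ (n + 1) := hcomap _ <| by
    have := sub_mem hFx hsub
    rwa [map_sub, sub_sub_cancel, ← map_eval] at this
  have hfG := Ideal.mem_map_of_mem f (hx.coeff_mem hG hGx d)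
  have := add_mem (hcoeff d) hfG
  rwa [coeff_sub, coeff_map, sub_add_cancel] at this

theorem of_map (hx : Ideal.span (Set.range x) = I) (hcomap : (I.map f).comap f ≤ I)
    (hfx : IsQuasiRegularSystem (I.map f) (f ∘ x)) : IsQuasiRegularSystem I x where
  span_range := hx
  coeff_mem {n F} hF hFx d := by
    have hmap : eval (f ∘ x) (MvPolynomial.map f F) ∈ I.map f ^ (n + 1) := by
      rw [← map_eval, ← Ideal.map_pow]
      exact Ideal.mem_map_of_mem f hFx
    have hd := hfx.coeff_mem (hF.map f) hmap d
    rw [coeff_map] at hd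
    exact hcomap hd

end IsQuasiRegularSystem

variable {R : Type*} [CommRing R] {I : Ideal R}

theorem comap_map_algebraMap_adicCompletion_pow_le (n : ℕ) :
    (I.map (algebraMap R (AdicCompletion I R)) ^ n).comap (algebraMap R (AdicCompletion I R)) ≤
      I ^ n := by
  have hker : I.map (algebraMap R (AdicCompletion I R)) ^ n ≤
      RingHom.ker (AdicCompletion.evalₐ I n) := by
    rw [← Ideal.map_pow, Ideal.map_le_iff_le_comap]
    intro r hr
    rw [Ideal.mem_comap, RingHom.mem_ker, AlgHom.commutes]
    exact Ideal.Quotient.eq_zero_iff_mem.mpr hr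
  intro r hr
  have := hker hr
  rw [RingHom.mem_ker, AlgHom.commutes] at this
  exact Ideal.Quotient.eq_zero_iff_mem.mp this

theorem mk_eq_mk_iff_evalOneₐ_eq (hI : I.FG) {a b : AdicCompletion I R} :
    Ideal.Quotient.mk (I.map (algebraMap R (AdicCompletion I R))) a = Ideal.Quotient.mk _ b ↔
      AdicCompletion.evalOneₐ I a = AdicCompletion.evalOneₐ I b := by
  rw [Ideal.Quotient.eq, ← AdicCompletion.ker_evalOneₐ_eq_map I hI]
  exact RingHom.sub_mem_ker_iff _

theorem mk_comp_algebraMap_adicCompletion_surjective (hI : I.FG) :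
    Function.Surjective ((Ideal.Quotient.mk (I.map (algebraMap R (AdicCompletion I R)))).comp
      (algebraMap R (AdicCompletion I R))) := by
  intro y
  obtain ⟨z, rfl⟩ := Ideal.Quotient.mk_surjective y
  obtain ⟨r, hr⟩ := Ideal.Quotient.mk_surjective (AdicCompletion.evalOneₐ I z)
  refine ⟨r, (mk_eq_mk_iff_evalOneₐ_eq hI).mpr ?_⟩
  rw [AlgHom.commutes, ← hr]
  rfl

theorem factorPow_evalₐ {m n : ℕ} (h : m ≤ n) (z : AdicCompletion I R) :
    Ideal.Quotient.factorPow I h (AdicCompletion.evalₐ I n z) = AdicCompletion.evalₐ I m z := by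
  induction z using AdicCompletion.induction_on with
  | _ z =>
    rw [AdicCompletion.evalₐ_mk, AdicCompletion.evalₐ_mk]
    exact AdicCompletion.Ideal.mk_eq_mk I h z

variable {E : Type*} [CommRing E] [Algebra E R]

theorem exists_algHom_adicCompletion_comp_eq {B : Type*} [CommRing B] [Algebra E B] {J : Ideal B}
    [IsAdicComplete J B] {φ : R →ₐ[E] B} (hφ : I ≤ J.comap φ) :
    ∃ Φ : AdicCompletion I R →ₐ[E] B,
      Φ.comp (IsScalarTower.toAlgHom E R (AdicCompletion I R)) = φ := by
  have hφn (n : ℕ) : I ^ n ≤ (J ^ n).comap φ :=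
    (Ideal.pow_right_mono hφ n).trans (Ideal.le_comap_pow φ n)
  let f (n : ℕ) : AdicCompletion I R →ₐ[E] B ⧸ J ^ n :=
    (Ideal.quotientMapₐ (J ^ n) φ (hφn n)).comp ((AdicCompletion.evalₐ I n).restrictScalars E)
  have hf {m n : ℕ} (hle : m ≤ n) :
      (Ideal.Quotient.factorₐ E (Ideal.pow_le_pow_right hle)).comp (f n) = f m := by
    ext z
    simp only [f, AlgHom.comp_apply, AlgHom.restrictScalars_apply]
    rw [← factorPow_evalₐ hle]
    obtain ⟨r, hr⟩ := Ideal.Quotient.mk_surjective (AdicCompletion.evalₐ I n z)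
    rw [← hr]
    rfl
  refine ⟨IsAdicComplete.liftAlgHom J f hf, DFunLike.coe_injective <|
    IsHausdorff.funext' J fun n r => ?_⟩
  rw [AlgHom.comp_apply, IsAdicComplete.mk_liftAlgHom]
  simp only [f, AlgHom.comp_apply, AlgHom.restrictScalars_apply, IsScalarTower.coe_toAlgHom',
    AlgHom.commutes]
  rfl

theorem exists_algHom_residue_section [Algebra.FormallySmooth E (R ⧸ I)] (hI : I.FG) :
    ∃ κ : R ⧸ I →ₐ[E] AdicCompletion I R, Function.Bijective
      ((Ideal.Quotient.mkₐ E (I.map (algebraMap R (AdicCompletion I R)))).comp κ) := by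
  obtain ⟨κ, hκ⟩ := Algebra.FormallySmooth.exists_adicCompletionEvalOneₐ_comp_eq
    (AlgHom.id E (R ⧸ I))
  have hκc (c : R ⧸ I) : AdicCompletion.evalOneₐ I (κ c) = c := DFunLike.congr_fun hκ c
  refine ⟨κ, fun c d h => ?_, fun y => ?_⟩
  · exact (hκc c).symm.trans (((mk_eq_mk_iff_evalOneₐ_eq hI).mp h).trans (hκc d))
  · obtain ⟨z, rfl⟩ := Ideal.Quotient.mk_surjective y
    exact ⟨AdicCompletion.evalOneₐ I z, (mk_eq_mk_iff_evalOneₐ_eq hI).mpr (hκc _)⟩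

end Completion

section AdicallyComplete

variable {T : Type*} [CommRing T] (𝔞 I : Ideal T)

theorem isAdicComplete_quotient [IsAdicComplete 𝔞 T] [IsHausdorff 𝔞 (T ⧸ I)] :
    IsAdicComplete (𝔞.map (Ideal.Quotient.mk I)) (T ⧸ I) := by
  have : IsAdicComplete 𝔞 (T ⧸ I) := by
    refine AdicCompletion.of_bijective_iff.mp ⟨AdicCompletion.of_injective 𝔞 _, fun y => ?_⟩
    obtain ⟨z, rfl⟩ := AdicCompletion.map_surjective 𝔞 (f := I.mkQ) I.mkQ_surjective y
    obtain ⟨t, rfl⟩ := AdicCompletion.of_surjective 𝔞 T z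
    exact ⟨I.mkQ t, (AdicCompletion.map_of 𝔞 I.mkQ t).symm⟩
  exact (IsAdicComplete.map_algebraMap_iff (S := T ⧸ I) 𝔞 (T ⧸ I)).mpr this

variable {𝔞 I}

theorem isAdicComplete_of_le [IsAdicComplete 𝔞 T] [∀ n, IsHausdorff 𝔞 (T ⧸ I ^ n)] (hI : I ≤ 𝔞) :
    IsAdicComplete I T where
  toIsHausdorff := IsHausdorff.of_map (J := 𝔞) (by simpa using hI)
  prec' f hf := by
    simp only [smul_eq_mul, Ideal.mul_top, SModEq.sub_mem] at hf ⊢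
    obtain ⟨L, hL⟩ := IsPrecomplete.prec ‹IsAdicComplete 𝔞 T›.toIsPrecomplete (f := f)
      fun {m n} hmn => by
        rw [SModEq.sub_mem, smul_eq_mul, Ideal.mul_top]
        exact Ideal.pow_right_mono hI m (hf hmn)
    simp only [smul_eq_mul, Ideal.mul_top, SModEq.sub_mem] at hL
    refine ⟨L, fun n => Ideal.Quotient.eq.mp <|
      (IsHausdorff.eq_iff_smodEq (I := 𝔞)).mpr fun N => ?_⟩
    have hfn : Ideal.Quotient.mk (I ^ n) (f n) = Ideal.Quotient.mk (I ^ n) (f (max n N)) :=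
      Ideal.Quotient.eq.mpr (hf (le_max_left n N))
    have hfL : f (max n N) - L ∈ 𝔞 ^ N := Ideal.pow_le_pow_right (le_max_right n N) (hL _)
    rw [hfn, SModEq.sub_mem, ← map_sub, Ideal.smul_top_eq_map]
    exact Ideal.mem_map_of_mem _ hfL

end AdicallyComplete

theorem IsQuasiRegularSystem.exists_lift {E R T σ : Type*} [CommRing E] [CommRing R] [Algebra E R]
    [CommRing T] [Algebra E T] [Finite σ] {𝔪 : Ideal R} {x : σ → R} {𝔞 I : Ideal T}
    [Algebra.FormallySmooth E (R ⧸ 𝔪)] [IsAdicComplete 𝔞 T] [IsAdicComplete I T]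
    [IsHausdorff 𝔞 (T ⧸ I)] (hx : IsQuasiRegularSystem 𝔪 x) (φ : R →ₐ[E] T ⧸ I)
    (hφ : 𝔪 ≤ (𝔞.map (Ideal.Quotient.mk I)).comap φ) :
    ∃ ψ : R →ₐ[E] T, (Ideal.Quotient.mkₐ E I).comp ψ = φ := by
  have fg : 𝔪.FG := hx.span_range ▸ Submodule.fg_span (Set.finite_range x)
  have := isAdicComplete_quotient 𝔞 I
  obtain ⟨Φ, hΦ⟩ := exists_algHom_adicCompletion_comp_eq hφ
  obtain ⟨κ, hκ⟩ := exists_algHom_residue_section (E := E) fg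
  have hx' := hx.map comap_map_algebraMap_adicCompletion_pow_le
    (mk_comp_algebraMap_adicCompletion_surjective fg)
  obtain ⟨Ψ, hΨ⟩ := exists_lift_of_bijective (𝔞 := 𝔞) hx' hκ Φ fun i => by
    have hi : Φ (algebraMap R _ (x i)) = φ (x i) := DFunLike.congr_fun hΦ (x i)
    rw [Function.comp_apply, hi]
    exact hφ (hx.mem i)
  exact ⟨Ψ.comp (IsScalarTower.toAlgHom E R _), by rw [← AlgHom.comp_assoc, hΨ, hΦ]⟩

theorem pow_mem_span_of_eval_eq_zero {R σ : Type*} [CommRing R] {F : MvPolynomial σ R} {n : ℕ}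
    (hF : F.IsHomogeneous n) {x b : σ → R} (hx : eval x F = 0) (hb : IsUnit (eval b F)) (j : σ) :
    x j ^ n ∈ Ideal.span (Set.range fun i => b j * x i - b i * x j) := by
  set Q := Ideal.span (Set.range fun i => b j * x i - b i * x j)
  have hmk : Ideal.Quotient.mk Q (eval (fun i => b j * x i) F) =
      Ideal.Quotient.mk Q (eval (fun i => x j * b i) F) := by
    rw [map_eval, map_eval]
    congr 2
    ext i
    rw [Function.comp_apply, Function.comp_apply, Ideal.Quotient.eq, mul_comm (x j)]
    exact Ideal.subset_span ⟨i, rfl⟩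
  rw [eval_mul_of_isHomogeneous hF, eval_mul_of_isHomogeneous hF, hx, mul_zero, map_zero, eq_comm,
    Ideal.Quotient.eq_zero_iff_mem] at hmk
  exact (Ideal.mul_unit_mem_iff_mem Q hb).mp hmk

open IsLocalRing

section LocalRing

variable {R σ : Type*} [CommRing R] [IsLocalRing R]

theorem ringKrullDim_le_card_of_maximalIdeal_le_radical [IsNoetherianRing R] {t : Finset R}
    (ht : Ideal.span (t : Set R) ≤ maximalIdeal R)
    (hrad : maximalIdeal R ≤ (Ideal.span (t : Set R)).radical) : ringKrullDim R ≤ t.card := by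
  have hmin : maximalIdeal R ∈ (Ideal.span (t : Set R)).minimalPrimes :=
    ⟨⟨inferInstance, ht⟩, fun p hp _ => hrad.trans (hp.1.radical_le_iff.mpr hp.2)⟩
  rw [← maximalIdeal_height_eq_ringKrullDim]
  exact_mod_cast Ideal.height_le_card_of_mem_minimalPrimes_span_finset hmin

theorem ringKrullDim_lt_card_of_eval_eq_zero [IsNoetherianRing R] [Fintype σ] {x : σ → R}
    (hx : Ideal.span (Set.range x) = maximalIdeal R) {F : MvPolynomial σ R} {n : ℕ}
    (hF : F.IsHomogeneous n) (hFx : eval x F = 0) {b : σ → R} (hb : IsUnit (eval b F)) :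
    ringKrullDim R < Fintype.card σ := by
  classical
  have hxm (i : σ) : x i ∈ maximalIdeal R := hx ▸ Ideal.subset_span (Set.mem_range_self i)
  obtain ⟨j, hj⟩ : ∃ j, IsUnit (b j) := by
    by_contra! h
    have hbx : residue R ∘ b = residue R ∘ x := by
      ext i
      exact ((residue_eq_zero_iff _).mpr (h i)).trans ((residue_eq_zero_iff _).mpr (hxm i)).symm
    refine (residue_ne_zero_iff_isUnit _).mpr hb ?_
    rw [map_eval, hbx, ← map_eval, hFx, map_zero]
  -- The `card σ - 1` elements `y i` with `i ≠ j` generate an ideal containing `x j ^ n`, hence one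
  -- with radical `maximalIdeal R`.
  let y (i : σ) : R := b j * x i - b i * x j
  let t : Finset R := (Finset.univ.erase j).image y
  have hyt (i : σ) : y i ∈ Ideal.span (t : Set R) := by
    by_cases hij : i = j
    · have : y i = 0 := by rw [hij]; exact sub_self _
      exact this ▸ Ideal.zero_mem _
    · exact Ideal.subset_span (by simpa [t] using ⟨i, hij, rfl⟩)
  have hxj : x j ∈ (Ideal.span (t : Set R)).radical :=
    ⟨n, Ideal.span_le.mpr (Set.range_subset_iff.mpr hyt)
      (pow_mem_span_of_eval_eq_zero hF hFx hb j)⟩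
  have hrad : maximalIdeal R ≤ (Ideal.span (t : Set R)).radical := by
    rw [← hx, Ideal.span_le, Set.range_subset_iff]
    intro i
    refine (Ideal.unit_mul_mem_iff_mem _ hj).mp ?_
    simpa [y] using add_mem (Ideal.le_radical (hyt i)) (Ideal.mul_mem_left _ (b i) hxj)
  have ht : Ideal.span (t : Set R) ≤ maximalIdeal R := by
    rw [Ideal.span_le, Finset.coe_image, Set.image_subset_iff]
    exact fun i _ => sub_mem (Ideal.mul_mem_left _ _ (hxm i)) (Ideal.mul_mem_left _ _ (hxm j))
  have hcard : t.card < Fintype.card σ :=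
    Finset.card_image_le.trans_lt (Finset.card_erase_lt_of_mem (Finset.mem_univ j))
  exact (ringKrullDim_le_card_of_maximalIdeal_le_radical ht hrad).trans_lt (by exact_mod_cast hcard)

theorem exists_isUnit_eval_of_coeff_notMem [Infinite (ResidueField R)] {F : MvPolynomial σ R}
    {d : σ →₀ ℕ} (hd : coeff d F ∉ maximalIdeal R) : ∃ b, IsUnit (eval b F) := by
  have hF : MvPolynomial.map (residue R) F ≠ 0 := fun h => hd <| by
    rw [← residue_eq_zero_iff, ← coeff_map, h, coeff_zero]
  obtain ⟨a, ha⟩ : ∃ a, eval a (MvPolynomial.map (residue R) F) ≠ 0 := by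
    by_contra! h
    exact hF (MvPolynomial.funext fun a => by rw [h a, map_zero])
  choose b hb using fun i => residue_surjective (a i)
  refine ⟨b, (residue_ne_zero_iff_isUnit _).mp ?_⟩
  rwa [map_eval, show residue R ∘ b = a from _root_.funext hb]

end LocalRing

section Regular

variable (R : Type*) [CommRing R] [IsLocalRing R]

instance : ((maximalIdeal R).map (Polynomial.C : R →+* Polynomial R)).IsPrime :=
  Ideal.isPrime_map_C_of_isPrime

/-- The localization `R(X)` of `R[X]` at the extension of the maximal ideal of the local ring `R`:
a local ring with the same dimension and generators of the maximal ideal as `R`, but with an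
infinite residue field. -/
abbrev NagataRing : Type _ :=
  Localization.AtPrime ((maximalIdeal R).map (Polynomial.C : R →+* Polynomial R))

theorem algebraMap_nagataRing_mem_maximalIdeal_iff {p : Polynomial R} :
    algebraMap (Polynomial R) (NagataRing R) p ∈ maximalIdeal (NagataRing R) ↔
      ∀ n, p.coeff n ∈ maximalIdeal R := by
  rw [← Ideal.mem_map_C_iff]
  exact IsLocalization.AtPrime.to_map_mem_maximal_iff _ _ _

theorem map_algebraMap_nagataRing_maximalIdeal :
    (maximalIdeal R).map (algebraMap R (NagataRing R)) =
      maximalIdeal (NagataRing R) := by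
  rw [IsScalarTower.algebraMap_eq R (Polynomial R), ← Ideal.map_map]
  exact Localization.AtPrime.map_eq_maximalIdeal

instance : Infinite (ResidueField (NagataRing R)) := by
  refine Infinite.of_injective (fun n : ℕ => residue (NagataRing R)
    (algebraMap (Polynomial R) _ (Polynomial.X ^ n))) fun m n hmn => ?_
  by_contra hne
  have hmem : algebraMap (Polynomial R) (NagataRing R) (Polynomial.X ^ m - Polynomial.X ^ n)
      ∈ maximalIdeal (NagataRing R) := by
    rw [← residue_eq_zero_iff, map_sub, map_sub, sub_eq_zero]
    exact hmn
  rw [algebraMap_nagataRing_mem_maximalIdeal_iff] at hmem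
  simpa [Polynomial.coeff_X_pow, hne] using hmem m

theorem ringKrullDim_nagataRing [IsNoetherianRing R] :
    ringKrullDim (NagataRing R) = ringKrullDim R := by
  rw [IsLocalization.AtPrime.ringKrullDim_eq_height
    ((maximalIdeal R).map (Polynomial.C : R →+* Polynomial R)), Polynomial.height_map_C,
    maximalIdeal_height_eq_ringKrullDim]

variable {R} {σ : Type*}

namespace IsQuasiRegularSystem

theorem of_card_le_ringKrullDim_of_infinite [IsNoetherianRing R] [Fintype σ]
    [Infinite (ResidueField R)] {x : σ → R} (hx : Ideal.span (Set.range x) = maximalIdeal R)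
    (hd : Fintype.card σ ≤ ringKrullDim R) : IsQuasiRegularSystem (maximalIdeal R) x := by
  refine .of_eval_eq_zero hx fun n F hF hFx d => ?_
  by_contra hFd
  obtain ⟨b, hb⟩ := exists_isUnit_eval_of_coeff_notMem hFd
  exact hd.not_gt (ringKrullDim_lt_card_of_eval_eq_zero hx hF hFx hb)

theorem of_card_le_ringKrullDim [IsNoetherianRing R] [Fintype σ] {x : σ → R}
    (hx : Ideal.span (Set.range x) = maximalIdeal R)
    (hd : Fintype.card σ ≤ ringKrullDim R) : IsQuasiRegularSystem (maximalIdeal R) x := by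
  have hmap := map_algebraMap_nagataRing_maximalIdeal R
  have hspan : Ideal.span (Set.range (algebraMap R (NagataRing R) ∘ x)) =
      maximalIdeal (NagataRing R) := by
    rw [Set.range_comp, ← Ideal.map_span, hx, hmap]
  refine .of_map (f := algebraMap R (NagataRing R)) hx ?_ ?_
  · intro r hr
    rw [hmap, Ideal.mem_comap, IsScalarTower.algebraMap_apply R (Polynomial R),
      algebraMap_nagataRing_mem_maximalIdeal_iff] at hr
    simpa using hr 0
  · rw [hmap]
    exact .of_card_le_ringKrullDim_of_infinite hspan (by rwa [ringKrullDim_nagataRing])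

end IsQuasiRegularSystem

end Regular

theorem exists_isQuasiRegularSystem_maximalIdeal (R : Type*) [CommRing R] [IsRegularLocalRing R] :
    ∃ s : Finset R, IsQuasiRegularSystem (maximalIdeal R) ((↑) : s → R) := by
  have hfin : (maximalIdeal R).generators.Finite :=
    Submodule.FG.finite_generators (maximalIdeal R).fg_of_isNoetherianRing
  refine ⟨hfin.toFinset, .of_card_le_ringKrullDim ?_ ?_⟩
  · rw [Subtype.range_coe_subtype]
    simpa using (maximalIdeal R).span_generators
  · rw [Fintype.card_coe, ← Set.ncard_eq_toFinset_card _ hfin,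
      Submodule.FG.generators_ncard (maximalIdeal R).fg_of_isNoetherianRing]
    exact IsRegularLocalRing.spanFinrank_maximalIdeal.le

theorem formallySmooth_of_charZero (E k : Type*) [Field E] [CharZero E] [Field k] [Algebra E k] :
    Algebra.FormallySmooth E k := by
  obtain ⟨s, hs⟩ := exists_isTranscendenceBasis E k
  have := hs.isAlgebraic_field
  have : CharZero (IntermediateField.adjoin E (Set.range ((↑) : s → k))) :=
    charZero_of_injective_algebraMap (algebraMap E _).injective
  exact Algebra.FormallySmooth.of_algebraicIndependent_of_isSeparable hs.1

theorem nontrivial_of_isLocalHom {R S : Type*} [CommRing R] [Nontrivial R] [CommRing S]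
    (f : R →+* S) [IsLocalHom f] : Nontrivial S := by
  by_contra h
  have := not_nontrivial_iff_subsingleton.mp h
  exact not_isUnit_zero (isUnit_of_map_unit f 0 (isUnit_of_subsingleton _))

theorem maximalIdeal_le_comap_map_mk {R T : Type*} [CommRing R] [IsLocalRing R] [CommRing T]
    [IsLocalRing T] {I : Ideal T} (φ : R →+* T ⧸ I) [IsLocalHom φ] :
    maximalIdeal R ≤ ((maximalIdeal T).map (Ideal.Quotient.mk I)).comap φ := by
  have := nontrivial_of_isLocalHom φ
  have : IsLocalRing (T ⧸ I) := .of_surjective' _ Ideal.Quotient.mk_surjective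
  rw [map_maximalIdeal_of_surjective _ Ideal.Quotient.mk_surjective, maximalIdeal_comap]

theorem formal_implicit_function_theorem_general {E R T : Type*} [CommRing E]
    [CommRing R] [IsRegularLocalRing R] [Algebra E R] [Algebra.FormallySmooth E (ResidueField R)]
    [CommRing T] [IsLocalRing T] [IsNoetherianRing T] [Algebra E T]
    [IsAdicComplete (maximalIdeal T) T] {I : Ideal T} (φ : R →ₐ[E] T ⧸ I)
    (hφ : IsLocalHom φ.toRingHom) :
    ∃ ψ : R →ₐ[E] T, IsLocalHom ψ.toRingHom ∧ (Ideal.Quotient.mkₐ E I).comp ψ = φ := by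
  have : Algebra.FormallySmooth E (R ⧸ maximalIdeal R) := ‹_›
  have hI : I ≠ ⊤ := Ideal.Quotient.nontrivial_iff.mp (nontrivial_of_isLocalHom φ.toRingHom)
  have : IsAdicComplete I T := isAdicComplete_of_le (le_maximalIdeal hI)
  obtain ⟨s, hs⟩ := exists_isQuasiRegularSystem_maximalIdeal R
  obtain ⟨ψ, rfl⟩ := hs.exists_lift φ (maximalIdeal_le_comap_map_mk φ.toRingHom)
  exact ⟨ψ, ⟨fun r hr => hφ.map_nonunit r (hr.map (Ideal.Quotient.mk I))⟩, rfl⟩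

/-- Formal implicit function theorem.  Let E be a field of characteristic
zero and R a regular Noetherian local E-algebra.  For every complete Noetherian local
E-algebra T, every nilpotent ideal I of T and every local E-algebra homomorphism
φ : R → T/I, there is a local E-algebra homomorphism ψ : R → T lifting φ. -/
theorem formal_implicit_function_theorem
    (E : Type*) [Field E] [CharZero E]
    (R : Type*) [CommRing R] [IsLocalRing R] [IsNoetherianRing R] [Algebra E R]
    (hreg : ∃ s : Finset R, Ideal.span (s : Set R) = IsLocalRing.maximalIdeal R ∧
      (s.card : WithBot (WithTop ℕ)) = ringKrullDim R)
    (T : Type*) [CommRing T] [IsLocalRing T] [IsNoetherianRing T] [Algebra E T]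
    [IsAdicComplete (IsLocalRing.maximalIdeal T) T]
    (I : Ideal T) (hI : ∃ n : ℕ, I ^ n = ⊥)
    (φ : R →ₐ[E] T ⧸ I) (hφ : IsLocalHom φ.toRingHom) :
    ∃ ψ : R →ₐ[E] T, IsLocalHom ψ.toRingHom ∧
      (Ideal.Quotient.mkₐ E I).comp ψ = φ := by
  obtain ⟨s, hs, hcard⟩ := hreg
  have : IsRegularLocalRing R := .of_spanFinrank_maximalIdeal_le _ <| by
    rw [← hs, ← hcard, ← Set.ncard_coe_finset]
    exact Nat.cast_le.mpr (Submodule.spanFinrank_span_le_ncard_of_finite s.finite_toSet)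
  have : Algebra.FormallySmooth E (IsLocalRing.ResidueField R) := formallySmooth_of_charZero E _
  exact formal_implicit_function_theorem_general φ hφ
end
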